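/- arXiv:2502.02925 — 5 statements merged into one kernel-verified Lean document; each statement's English description precedes it below -/
import Mathlib

section
/- Let ν ∈ P_{2,0}(ℝ^d), let D ⊂ P_2(ℝ^d), and let μ* be a maximizer of Var(μ) over {μ ∈ D : μ ≤_c ν}. Then for every ρ ∈ D with ρ ≤_c ν, one has W_2(μ*, ρ) ≤ √(Var(ν) − Var(ρ)) + W_2(ν, ρ). In particular W_2(μ*, ρ) → 0 as W_2(ν, ρ) → 0. -/
/-!
The triangle inequality for `W2` reduces the claim to `W2(μ*, ν)² ≤ Var ν - Var μ*`, since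
`Var ρ ≤ Var μ*` by maximality. Expanding the square, and using that `ν` is centred, this asks for
couplings of `μ* ≤_c ν` with `∫ ⟪x, y⟫` arbitrarily close to `∫ ‖x‖² dμ*`. A martingale coupling
would do, but the proof replaces Strassen's theorem by a finite-dimensional separation argument.

Partition `ℝ^d` into finitely many cells `A i` of positive `μ*`-mass and small oscillation, with
barycenters `x i` (`exists_partition`). Splitting `ν` as `∑ g i • ν`, with `g` a measurable map to
the simplex, yields a convex set of pairs (masses `∫ g i dν`, correlation `∑ ⟪x i, ∫ g i y dν⟫`).
The pair (`μ* (A i)`, `∑ ⟪x i, ∫_{A i} x dμ*⟫`) lies in its closure (`mem_closure_massCorr`):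
otherwise a separating functional `(l, c)` gives the convex function
`h y = max_i (l i + c ⟪x i, y⟫)` with `∫ h dν < ∫ h dμ*`, against the convex order. A small mixture
with an independent splitting makes the masses exact (`exists_weights_mass_eq`), and coupling
`A i` independently with `g i • ν` gives the coupling of `μ*` and `ν`
(`exists_coupling_of_weights`).

The triangle inequality (`W2_le_add`) comes from gluing couplings by disintegration
(`exists_gluing`).
-/

open MeasureTheory Filter
open scoped RealInnerProductSpace Topology

noncomputable section

/-- `Rd d` is the Euclidean space `ℝ^d`. -/
abbrev Rd (d : ℕ) := EuclideanSpace ℝ (Fin d)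

/-- A measure has finite second moment if `x ↦ ‖x‖²` is integrable. -/
def FiniteSecondMoment {d : ℕ} (μ : Measure (Rd d)) : Prop :=
  Integrable (fun x => ‖x‖ ^ 2) μ

/-- `π` is a coupling of `μ` and `ν` if its marginals are `μ` and `ν`. -/
def IsCoupling {d : ℕ} (π : Measure (Rd d × Rd d)) (μ ν : Measure (Rd d)) : Prop :=
  π.map Prod.fst = μ ∧ π.map Prod.snd = ν

/-- The squared 2-Wasserstein distance: `W₂²(μ,ν) = inf_{π ∈ Π(μ,ν)} ∫ |x-y|² dπ`. -/
def W2sq {d : ℕ} (μ ν : Measure (Rd d)) : ℝ :=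
  sInf ((fun π : Measure (Rd d × Rd d) => ∫ p, ‖p.1 - p.2‖ ^ 2 ∂π) ''
    {π | IsCoupling π μ ν})

/-- The 2-Wasserstein distance. -/
def W2 {d : ℕ} (μ ν : Measure (Rd d)) : ℝ := Real.sqrt (W2sq μ ν)

/-- The variance of a measure: `Var(μ) = ∫ |x - ∫ x dμ|² dμ(x)`. -/
def Var {d : ℕ} (μ : Measure (Rd d)) : ℝ := ∫ x, ‖x - ∫ y, y ∂μ‖ ^ 2 ∂μ

/-- Convex order: `μ ≤_c ν` iff `∫ f dμ ≤ ∫ f dν` for every (integrable) convex `f`. -/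
def ConvexOrder {d : ℕ} (μ ν : Measure (Rd d)) : Prop :=
  ∀ f : Rd d → ℝ, ConvexOn ℝ Set.univ f → Integrable f μ → Integrable f ν →
    ∫ x, f x ∂μ ≤ ∫ x, f x ∂ν

/-- Kantorovich dominance: `μ ≼_K ν` iff there is a coupling `π` of `μ` and `ν` with
`∫ ⟨x - b_ν, y - x⟩ dπ = 0`, where `b_ν` is the barycenter of `ν`. -/
def KDom {d : ℕ} (μ ν : Measure (Rd d)) : Prop :=
  ∃ π : Measure (Rd d × Rd d), IsCoupling π μ ν ∧
    (∫ p : Rd d × Rd d, ⟪p.1 - ∫ y, y ∂ν, p.2 - p.1⟫ ∂π) = 0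

open ProbabilityTheory

/-! ### Second moments, gluing and the triangle inequality -/

lemma FiniteSecondMoment.memLp {d : ℕ} {μ : Measure (Rd d)} (h : FiniteSecondMoment μ) :
    MemLp (fun x : Rd d => x) 2 μ :=
  (memLp_two_iff_integrable_sq_norm aestronglyMeasurable_id).2 h

lemma FiniteSecondMoment.integrable_id {d : ℕ} {μ : Measure (Rd d)} [IsProbabilityMeasure μ]
    (h : FiniteSecondMoment μ) : Integrable (fun x : Rd d => x) μ :=
  h.memLp.integrable one_le_two

lemma integrable_norm_sub_sq {Ω : Type*} [MeasurableSpace Ω] {d : ℕ} {π : Measure Ω}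
    {f g : Ω → Rd d} (hf : MemLp f 2 π) (hg : MemLp g 2 π) :
    Integrable (fun p => ‖f p - g p‖ ^ 2) π :=
  (memLp_two_iff_integrable_sq_norm (hf.sub hg).1).1 (hf.sub hg)

lemma integral_norm_sub_sq {Ω : Type*} [MeasurableSpace Ω] {d : ℕ} {π : Measure Ω}
    {f g : Ω → Rd d} (hf : MemLp f 2 π) (hg : MemLp g 2 π) :
    ∫ p, ‖f p - g p‖ ^ 2 ∂π
      = ∫ p, ‖f p‖ ^ 2 ∂π - 2 * ∫ p, ⟪f p, g p⟫ ∂π + ∫ p, ‖g p‖ ^ 2 ∂π := by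
  have i1 := (memLp_two_iff_integrable_sq_norm hf.1).1 hf
  have i2 := (memLp_two_iff_integrable_sq_norm hg.1).1 hg
  have i3 : Integrable (fun p => ⟪f p, g p⟫) π := by
    have := ((i1.add i2).sub (integrable_norm_sub_sq hf hg)).const_mul (1 / 2)
    refine this.congr (ae_of_all _ fun p => ?_)
    simp only [Pi.add_apply, Pi.sub_apply, norm_sub_sq_real]
    ring
  have i4 : Integrable (fun p => ‖f p‖ ^ 2 - 2 * ⟪f p, g p⟫) π := i1.sub (i3.const_mul 2)
  rw [← integral_const_mul, ← integral_sub i1 (i3.const_mul 2), ← integral_add i4 i2]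
  exact integral_congr_ae (ae_of_all _ fun p => norm_sub_sq_real _ _)

lemma memLp_comp_of_map_eq {Ω : Type*} [MeasurableSpace Ω] {d : ℕ} {π : Measure Ω}
    {f : Ω → Rd d} {μ : Measure (Rd d)} (hf : Measurable f) (h : π.map f = μ)
    (hμ : FiniteSecondMoment μ) : MemLp f 2 π := by
  subst h
  exact (memLp_map_measure_iff aestronglyMeasurable_id hf.aemeasurable).1 hμ.memLp

lemma W2sq_le {d : ℕ} {μ ν : Measure (Rd d)} {π : Measure (Rd d × Rd d)}
    (h : IsCoupling π μ ν) : W2sq μ ν ≤ ∫ p, ‖p.1 - p.2‖ ^ 2 ∂π := by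
  refine csInf_le ⟨0, ?_⟩ ⟨π, h, rfl⟩
  rintro _ ⟨π', -, rfl⟩
  exact integral_nonneg fun p => by positivity

/-- Gluing lemma: two couplings sharing the marginal `ν` are the two-dimensional marginals of one
measure. The middle variable `y` comes first; given `y`, the outer variables are independent. -/
lemma exists_gluing {d : ℕ} {μ ν ρ : Measure (Rd d)} [IsProbabilityMeasure ν]
    {π₁ π₂ : Measure (Rd d × Rd d)} (h₁ : IsCoupling π₁ μ ν) (h₂ : IsCoupling π₂ ν ρ) :
    ∃ γ : Measure (Rd d × (Rd d × Rd d)),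
      γ.map (fun q => (q.2.1, q.1)) = π₁ ∧ γ.map (fun q => (q.1, q.2.2)) = π₂ := by
  have hprob : ∀ π : Measure (Rd d × Rd d), π.fst = ν → IsProbabilityMeasure π := by
    intro π h
    constructor
    rw [← Measure.fst_univ, h, measure_univ]
  have hs : (π₁.map Prod.swap).fst = ν := by
    rw [Measure.fst_map_swap, Measure.snd, h₁.2]
  have h2 : π₂.fst = ν := h₂.1
  have i1 := hprob _ hs
  have i2 := hprob _ h2
  set κ₁ := (π₁.map Prod.swap).condKernel
  set κ₂ := π₂.condKernel
  have e1 : ν ⊗ₘ κ₁ = π₁.map Prod.swap := by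
    rw [← hs]; exact Measure.disintegrate _ _
  have e2 : ν ⊗ₘ κ₂ = π₂ := by
    rw [← h2]; exact Measure.disintegrate _ _
  refine ⟨ν ⊗ₘ (κ₁ ×ₖ κ₂), ?_, ?_⟩
  · have : (ν ⊗ₘ (κ₁ ×ₖ κ₂)).map (Prod.map id Prod.fst) = π₁.map Prod.swap := by
      rw [← Measure.compProd_map measurable_fst, ← Kernel.fst_eq, Kernel.fst_prod, e1]
    have h := congrArg (Measure.map Prod.swap) this
    rw [Measure.map_map measurable_swap (by fun_prop),
      Measure.map_map measurable_swap measurable_swap, Prod.swap_swap_eq, Measure.map_id] at h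
    exact h
  · have : (ν ⊗ₘ (κ₁ ×ₖ κ₂)).map (Prod.map id Prod.snd) = π₂ := by
      rw [← Measure.compProd_map measurable_snd, ← Kernel.snd_eq, Kernel.snd_prod, e2]
    exact this

/-- Triangle inequality for `W2`, at the level of couplings and with positive upper bounds
`A`, `B` on the two distances. -/
lemma W2_le_add {d : ℕ} {μ ν ρ : Measure (Rd d)} [IsProbabilityMeasure ν]
    (hμ : FiniteSecondMoment μ) (hν : FiniteSecondMoment ν) (hρ : FiniteSecondMoment ρ)
    {π₁ π₂ : Measure (Rd d × Rd d)} (h₁ : IsCoupling π₁ μ ν) (h₂ : IsCoupling π₂ ν ρ)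
    {A B : ℝ} (hA : 0 < A) (hB : 0 < B)
    (hA1 : ∫ p, ‖p.1 - p.2‖ ^ 2 ∂π₁ ≤ A ^ 2) (hB1 : ∫ p, ‖p.1 - p.2‖ ^ 2 ∂π₂ ≤ B ^ 2) :
    W2 μ ρ ≤ A + B := by
  obtain ⟨γ, g1, g2⟩ := exists_gluing h₁ h₂
  have m1 : Measurable (fun q : Rd d × (Rd d × Rd d) => (q.2.1, q.1)) := by fun_prop
  have m2 : Measurable (fun q : Rd d × (Rd d × Rd d) => (q.1, q.2.2)) := by fun_prop
  have mc : Measurable (fun p : Rd d × Rd d => ‖p.1 - p.2‖ ^ 2) := by fun_prop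
  have x1 : γ.map (fun q => q.2.1) = μ := by
    rw [← h₁.1, ← g1, Measure.map_map measurable_fst m1]; rfl
  have x2 : γ.map (fun q => q.1) = ν := by
    rw [← h₁.2, ← g1, Measure.map_map measurable_snd m1]; rfl
  have x3 : γ.map (fun q => q.2.2) = ρ := by
    rw [← h₂.2, ← g2, Measure.map_map measurable_snd m2]; rfl
  have l1 := memLp_comp_of_map_eq (by fun_prop) x1 hμ
  have l2 := memLp_comp_of_map_eq (by fun_prop) x2 hν
  have l3 := memLp_comp_of_map_eq (by fun_prop) x3 hρ
  have hc : IsCoupling (γ.map Prod.snd) μ ρ := by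
    constructor
    · rw [Measure.map_map measurable_fst measurable_snd]; exact x1
    · rw [Measure.map_map measurable_snd measurable_snd]; exact x3
  have I1 : ∫ q, ‖q.2.1 - q.1‖ ^ 2 ∂γ ≤ A ^ 2 := by
    rw [← g1, integral_map m1.aemeasurable mc.aestronglyMeasurable] at hA1
    exact hA1
  have I2 : ∫ q, ‖q.1 - q.2.2‖ ^ 2 ∂γ ≤ B ^ 2 := by
    rw [← g2, integral_map m2.aemeasurable mc.aestronglyMeasurable] at hB1
    exact hB1
  refine Real.sqrt_le_iff.2 ⟨by positivity, (W2sq_le hc).trans ?_⟩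
  rw [integral_map measurable_snd.aemeasurable mc.aestronglyMeasurable]
  -- Young's inequality with weight `B / A` replaces Minkowski's inequality.
  have key : ∀ q : Rd d × (Rd d × Rd d), ‖q.2.1 - q.2.2‖ ^ 2 ≤
      (1 + B / A) * ‖q.2.1 - q.1‖ ^ 2 + (1 + A / B) * ‖q.1 - q.2.2‖ ^ 2 := by
    intro q
    have ht := norm_sub_le_norm_sub_add_norm_sub q.2.1 q.1 q.2.2
    set a := ‖q.2.1 - q.1‖
    set b := ‖q.1 - q.2.2‖
    have h2 : 2 * a * b ≤ B / A * a ^ 2 + A / B * b ^ 2 := by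
      have : B / A * a ^ 2 + A / B * b ^ 2 - 2 * a * b = (B * a - A * b) ^ 2 / (A * B) := by
        field_simp; ring
      have : 0 ≤ (B * a - A * b) ^ 2 / (A * B) := by positivity
      linarith
    nlinarith [norm_nonneg (q.2.1 - q.2.2)]
  have J1 := integrable_norm_sub_sq l1 l2
  have J2 := integrable_norm_sub_sq l2 l3
  calc ∫ q, ‖q.2.1 - q.2.2‖ ^ 2 ∂γ
      ≤ ∫ q, ((1 + B / A) * ‖q.2.1 - q.1‖ ^ 2 + (1 + A / B) * ‖q.1 - q.2.2‖ ^ 2) ∂γ :=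
        integral_mono (integrable_norm_sub_sq l1 l3)
          ((J1.const_mul _).add (J2.const_mul _)) key
    _ = (1 + B / A) * ∫ q, ‖q.2.1 - q.1‖ ^ 2 ∂γ + (1 + A / B) * ∫ q, ‖q.1 - q.2.2‖ ^ 2 ∂γ := by
        rw [integral_add (J1.const_mul _) (J2.const_mul _), integral_const_mul,
          integral_const_mul]
    _ ≤ (1 + B / A) * A ^ 2 + (1 + A / B) * B ^ 2 := by gcongr
    _ = (A + B) ^ 2 := by field_simp; ring

/-! ### Splittings of `ν` and the separation argument -/

/-- Measurable maps from `ℝ^d` to the probability simplex on `ι`, listed by coordinates. -/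
def SimplexWeights (d : ℕ) (ι : Type) [Fintype ι] : Set (ι → Rd d → ℝ) :=
  {g | (∀ i, Measurable (g i)) ∧ (∀ i y, 0 ≤ g i y) ∧ ∀ y, ∑ i, g i y = 1}

/-- Splitting `ν` into the pieces `g i • ν`, and sending the `i`-th piece to the point `x i`, gives
a coupling with a discrete measure. This records the masses of the pieces together with the
correlation `∫ ⟪x, y⟫` of that coupling. -/
def massCorr {d : ℕ} {ι : Type} [Fintype ι] (ν : Measure (Rd d)) (x : ι → Rd d)
    (g : ι → Rd d → ℝ) : (ι → ℝ) × ℝ :=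
  (fun i => ∫ y, g i y ∂ν, ∑ i, ⟪x i, ∫ y, g i y • y ∂ν⟫)

section weights

variable {d : ℕ} {ι : Type} [Fintype ι] {g : ι → Rd d → ℝ}

lemma SimplexWeights.le_one (hg : g ∈ SimplexWeights d ι) (i : ι) (y : Rd d) : g i y ≤ 1 := by
  rw [← hg.2.2 y]
  exact Finset.single_le_sum (f := fun i => g i y) (fun j _ => hg.2.1 j y) (Finset.mem_univ i)

lemma SimplexWeights.norm_le_one (hg : g ∈ SimplexWeights d ι) (i : ι) (y : Rd d) :
    ‖g i y‖ ≤ 1 := by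
  rw [Real.norm_of_nonneg (hg.2.1 i y)]
  exact SimplexWeights.le_one hg i y

lemma SimplexWeights.integrable (hg : g ∈ SimplexWeights d ι) (ν : Measure (Rd d))
    [IsProbabilityMeasure ν] (i : ι) : Integrable (g i) ν :=
  Integrable.of_bound (hg.1 i).aestronglyMeasurable 1
    (ae_of_all _ (SimplexWeights.norm_le_one hg i))

lemma SimplexWeights.integrable_smul {E : Type*} [NormedAddCommGroup E] [NormedSpace ℝ E]
    (hg : g ∈ SimplexWeights d ι) {ν : Measure (Rd d)}
    {f : Rd d → E} (hf : Integrable f ν) (i : ι) : Integrable (fun y => g i y • f y) ν :=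
  hf.bdd_smul 1 (hg.1 i).aestronglyMeasurable
    (ae_of_all _ (SimplexWeights.norm_le_one hg i))

lemma SimplexWeights.combo {g' : ι → Rd d → ℝ} (hg : g ∈ SimplexWeights d ι)
    (hg' : g' ∈ SimplexWeights d ι) {α β : ℝ} (hα : 0 ≤ α) (hβ : 0 ≤ β) (h : α + β = 1) :
    (fun i y => α * g i y + β * g' i y) ∈ SimplexWeights d ι := by
  refine ⟨fun i => ?_, fun i y => ?_, fun y => ?_⟩
  · exact ((hg.1 i).const_mul α).add ((hg'.1 i).const_mul β)
  · have := hg.2.1 i y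
    have := hg'.2.1 i y
    positivity
  · rw [Finset.sum_add_distrib, ← Finset.mul_sum, ← Finset.mul_sum, hg.2.2, hg'.2.2]
    linarith

lemma massCorr_combo {g' : ι → Rd d → ℝ} (hg : g ∈ SimplexWeights d ι)
    (hg' : g' ∈ SimplexWeights d ι) {ν : Measure (Rd d)} [IsProbabilityMeasure ν]
    (hν : FiniteSecondMoment ν) (x : ι → Rd d) (α β : ℝ) :
    massCorr ν x (fun i y => α * g i y + β * g' i y)
      = α • massCorr ν x g + β • massCorr ν x g' := by
  refine Prod.ext (funext fun i => ?_) ?_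
  · simp only [massCorr, Prod.fst_add, Prod.smul_fst, Pi.add_apply, Pi.smul_apply, smul_eq_mul]
    rw [integral_add ((SimplexWeights.integrable hg ν i).const_mul α)
      ((SimplexWeights.integrable hg' ν i).const_mul β), integral_const_mul, integral_const_mul]
  · simp only [massCorr, Prod.snd_add, Prod.smul_snd, smul_eq_mul, Finset.mul_sum]
    rw [← Finset.sum_add_distrib]
    refine Finset.sum_congr rfl fun i _ => ?_
    have h1 := SimplexWeights.integrable_smul hg hν.integrable_id i
    have h2 := SimplexWeights.integrable_smul hg' hν.integrable_id i
    have : ∫ y, (α * g i y + β * g' i y) • y ∂ν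
        = α • ∫ y, g i y • y ∂ν + β • ∫ y, g' i y • y ∂ν := by
      rw [← integral_smul, ← integral_smul]
      refine Eq.trans ?_ (integral_add (h1.smul α) (h2.smul β))
      exact integral_congr_ae (ae_of_all _ fun y => by simp [add_smul, mul_smul])
    rw [this, inner_add_right, inner_smul_right, inner_smul_right]

lemma convex_massCorr {ν : Measure (Rd d)} [IsProbabilityMeasure ν]
    (hν : FiniteSecondMoment ν) (x : ι → Rd d) :
    Convex ℝ (massCorr ν x '' SimplexWeights d ι) := by
  rintro _ ⟨g, hg, rfl⟩ _ ⟨g', hg', rfl⟩ α β hα hβ h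
  exact ⟨_, SimplexWeights.combo hg hg' hα hβ h, massCorr_combo hg hg' hν x α β⟩

/-- Uniform weights on the set of maximizing indices: a measurable selection of the maximum of
finitely many measurable functions. -/
lemma exists_argmax_weights [Nonempty ι] (v : ι → Rd d → ℝ) (hv : ∀ i, Measurable (v i)) :
    ∃ g ∈ SimplexWeights d ι, ∀ i y, v i y ≤ ∑ j, g j y * v j y := by
  classical
  let A : ι → Set (Rd d) := fun j => {y | ∀ k, v k y ≤ v j y}
  have hA : ∀ j, MeasurableSet (A j) := fun j => by
    have : A j = ⋂ k, {y | v k y ≤ v j y} := by ext; simp [A]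
    rw [this]
    exact MeasurableSet.iInter fun k => measurableSet_le (hv k) (hv j)
  let w : ι → Rd d → ℝ := fun j => (A j).indicator 1
  have hw : ∀ j, Measurable (w j) := fun j => measurable_one.indicator (hA j)
  have hw0 : ∀ j y, 0 ≤ w j y := fun j y => Set.indicator_nonneg (fun _ _ => zero_le_one) y
  have hpos : ∀ y, 0 < ∑ k, w k y := by
    intro y
    obtain ⟨j, hj⟩ := Finite.exists_max (fun k => v k y)
    refine Finset.sum_pos' (fun k _ => hw0 k y) ⟨j, Finset.mem_univ j, ?_⟩
    have : y ∈ A j := hj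
    simp [w, this]
  have hsum : ∀ y, ∑ j, w j y / ∑ k, w k y = 1 := fun y => by
    rw [← Finset.sum_div, div_self (hpos y).ne']
  refine ⟨fun j y => w j y / ∑ k, w k y, ⟨fun j => ?_, fun j y => ?_, hsum⟩, fun i y => ?_⟩
  · exact (hw j).div (Finset.measurable_fun_sum _ fun k _ => hw k)
  · exact div_nonneg (hw0 j y) (hpos y).le
  · calc v i y = ∑ j, w j y / (∑ k, w k y) * v i y := by rw [← Finset.sum_mul, hsum, one_mul]
      _ ≤ ∑ j, w j y / (∑ k, w k y) * v j y := by
        refine Finset.sum_le_sum fun j _ => ?_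
        by_cases hy : y ∈ A j
        · exact mul_le_mul_of_nonneg_left (hy i) (div_nonneg (hw0 j y) (hpos y).le)
        · simp [w, hy]

lemma integral_eq_sum_setIntegral {E : Type*} [NormedAddCommGroup E] [NormedSpace ℝ E]
    {μ : Measure (Rd d)} {A : ι → Set (Rd d)} (hA : ∀ i, MeasurableSet (A i))
    (hdisj : Pairwise (Function.onFun Disjoint A)) (hcov : ⋃ i, A i = Set.univ) {f : Rd d → E}
    (hf : Integrable f μ) : ∫ x, f x ∂μ = ∑ i, ∫ x in A i, f x ∂μ := by
  rw [← integral_iUnion_fintype hA hdisj fun i => hf.integrableOn, hcov, setIntegral_univ]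

/-- The heart of the argument. If the target were outside the closure, a separating affine
functional would produce the convex function `max_i (l i + c ⟪x i, y⟫)`, whose integral against `ν`
is smaller than that against `μ`. -/
lemma mem_closure_massCorr [Nonempty ι] {μ ν : Measure (Rd d)} [IsProbabilityMeasure μ]
    [IsProbabilityMeasure ν] (hμ : FiniteSecondMoment μ) (hν : FiniteSecondMoment ν)
    (hord : ConvexOrder μ ν) {A : ι → Set (Rd d)} (hA : ∀ i, MeasurableSet (A i))
    (hdisj : Pairwise (Function.onFun Disjoint A)) (hcov : ⋃ i, A i = Set.univ)
    (x : ι → Rd d) :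
    ((fun i => μ.real (A i), ∑ i, ⟪x i, ∫ z in A i, z ∂μ⟫) : (ι → ℝ) × ℝ)
      ∈ closure (massCorr ν x '' SimplexWeights d ι) := by
  classical
  by_contra hnot
  obtain ⟨f, u, hf1, hf2⟩ := geometric_hahn_banach_closed_point (convex_massCorr hν x).closure
    isClosed_closure hnot
  set l : ι → ℝ := fun i => f (Pi.single i 1, 0)
  set c : ℝ := f (0, 1)
  have hf : ∀ (w : ι → ℝ) (t : ℝ), f (w, t) = ∑ i, w i * l i + t * c := by
    intro w t
    have : ((w, t) : (ι → ℝ) × ℝ)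
        = ∑ i, w i • ((Pi.single i 1, 0) : (ι → ℝ) × ℝ) + t • ((0, 1) : (ι → ℝ) × ℝ) := by
      refine Prod.ext ?_ ?_
      · ext j
        simp [Prod.fst_sum, Finset.sum_apply, Pi.single_apply]
      · simp [Prod.snd_sum]
    rw [this, map_add, map_sum, map_smul]
    simp only [map_smul, smul_eq_mul, l, c]
  let v : ι → Rd d → ℝ := fun i y => l i + c * ⟪x i, y⟫
  have hvm : ∀ i, Measurable (v i) := fun i => by fun_prop
  obtain ⟨g, hg, hmax⟩ := exists_argmax_weights v hvm
  set h : Rd d → ℝ := fun y => ∑ j, g j y * v j y with hh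
  have hvi : ∀ (σ : Measure (Rd d)) [IsFiniteMeasure σ], Integrable (fun x : Rd d => x) σ →
      ∀ i, Integrable (v i) σ := fun σ _ hσ i =>
    (integrable_const _).add ((hσ.const_inner (x i)).const_mul c)
  have hhi : ∀ (σ : Measure (Rd d)) [IsFiniteMeasure σ], Integrable (fun x : Rd d => x) σ →
      Integrable h σ := fun σ _ hσ =>
    integrable_finsetSum _ fun j _ => SimplexWeights.integrable_smul hg (hvi σ hσ j) j
  have hconv : ConvexOn ℝ Set.univ h := by
    refine ⟨convex_univ, fun y _ z _ α β hα hβ hαβ => ?_⟩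
    have haff : ∀ j, v j (α • y + β • z) = α * v j y + β * v j z := fun j => by
      simp only [v, inner_add_right, inner_smul_right]
      linear_combination (-(l j)) * hαβ
    have hle : ∀ j, v j (α • y + β • z) ≤ α * h y + β * h z := fun j => by
      rw [haff]
      exact add_le_add (mul_le_mul_of_nonneg_left (hmax j y) hα)
        (mul_le_mul_of_nonneg_left (hmax j z) hβ)
    calc h (α • y + β • z) ≤ ∑ j, g j (α • y + β • z) * (α * h y + β * h z) :=
          Finset.sum_le_sum fun j _ => mul_le_mul_of_nonneg_left (hle j) (hg.2.1 j _)
      _ = α • h y + β • h z := by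
          rw [← Finset.sum_mul, hg.2.2, one_mul, smul_eq_mul, smul_eq_mul]
  have iμ := hμ.integrable_id
  have iν := hν.integrable_id
  have hle := hord h hconv (hhi μ iμ) (hhi ν iν)
  -- The functional at the target is at most `∫ h dμ`.
  have lower : f (fun i => μ.real (A i), ∑ i, ⟪x i, ∫ z in A i, z ∂μ⟫) ≤ ∫ y, h y ∂μ := by
    rw [hf, integral_eq_sum_setIntegral hA hdisj hcov (hhi μ iμ), Finset.sum_mul,
      ← Finset.sum_add_distrib]
    refine Finset.sum_le_sum fun i _ => ?_
    have e : ∫ y in A i, v i y ∂μ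
        = μ.real (A i) * l i + ⟪x i, ∫ z in A i, z ∂μ⟫ * c := by
      rw [integral_add (integrable_const _)
        ((iμ.integrableOn.const_inner (x i)).const_mul c), setIntegral_const, integral_const_mul,
        integral_inner iμ.integrableOn, smul_eq_mul, mul_comm c]
    rw [← e]
    exact setIntegral_mono (hvi μ iμ i).integrableOn (hhi μ iμ).integrableOn (hmax i)
  -- The functional at the selection of the maximum is exactly `∫ h dν`.
  have upper : f (massCorr ν x g) = ∫ y, h y ∂ν := by
    have hterm : ∀ j, Integrable (fun y => g j y * v j y) ν := fun j =>
      SimplexWeights.integrable_smul hg (hvi ν iν j) j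
    rw [massCorr, hf, integral_finsetSum _ fun j _ => hterm j, Finset.sum_mul,
      ← Finset.sum_add_distrib]
    refine Finset.sum_congr rfl fun i _ => ?_
    have hi := SimplexWeights.integrable_smul hg iν i
    rw [← integral_inner hi, ← integral_mul_const, ← integral_mul_const,
      ← integral_add ((SimplexWeights.integrable hg ν i).mul_const _)
        ((hi.const_inner (x i)).mul_const c)]
    refine integral_congr_ae (ae_of_all _ fun y => ?_)
    simp only [v, inner_smul_right]
    ring
  have := hf1 _ (subset_closure ⟨g, hg, rfl⟩)
  linarith

/-- Points of the closure can be reached exactly in their masses, because mixing with the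
independent splitting `e i • ν` corrects the masses and, `ν` being centred, changes the correlation
only by the factor `1 - θ`. -/
lemma exists_weights_mass_eq [Nonempty ι] {ν : Measure (Rd d)} [IsProbabilityMeasure ν]
    (hν : FiniteSecondMoment ν) (hν0 : (∫ y, y ∂ν) = 0) {x : ι → Rd d} {a : ι → ℝ} {s : ℝ}
    (ha : ∀ i, 0 < a i) (hsum : ∑ i, a i = 1)
    (hmem : (a, s) ∈ closure (massCorr ν x '' SimplexWeights d ι)) {ε : ℝ} (hε : 0 < ε) :
    ∃ g ∈ SimplexWeights d ι, (∀ i, ∫ y, g i y ∂ν = a i) ∧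
      s - ε ≤ ∑ i, ⟪x i, ∫ y, g i y • y ∂ν⟫ := by
  obtain ⟨i₀, hi₀⟩ := Finite.exists_min a
  set θ : ℝ := ε / (2 * (|s| + 1) + ε) with hθ
  have hden : 0 < 2 * (|s| + 1) + ε := by positivity
  have hθ0 : 0 < θ := by positivity
  have hθ1 : θ < 1 := by
    rw [hθ, div_lt_one hden]
    have := abs_nonneg s
    linarith
  have hθs : θ * (|s| + 1) ≤ ε / 2 := by
    rw [hθ, div_mul_eq_mul_div, div_le_iff₀ hden]
    nlinarith
  have hη : 0 < min (θ * a i₀) (min (ε / 2) 1) := by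
    have := ha i₀
    positivity
  obtain ⟨_, ⟨g, hg, rfl⟩, hdist⟩ := Metric.mem_closure_iff.1 hmem _ hη
  rw [Prod.dist_eq, max_lt_iff, lt_min_iff, lt_min_iff, lt_min_iff, lt_min_iff] at hdist
  obtain ⟨⟨hd1, -⟩, -, hd2, hd3⟩ := hdist
  rw [Real.dist_eq] at hd2 hd3
  set t := (massCorr ν x g).2
  have hu : ∀ i, |a i - ∫ y, g i y ∂ν| ≤ θ * a i := fun i => by
    have := (dist_le_pi_dist a (massCorr ν x g).1 i).trans hd1.le
    rw [Real.dist_eq] at this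
    exact this.trans (mul_le_mul_of_nonneg_left (hi₀ i) hθ0.le)
  have husum : ∑ i, ∫ y, g i y ∂ν = 1 := by
    rw [← integral_finsetSum _ fun i _ => SimplexWeights.integrable hg ν i]
    simp [hg.2.2]
  let e : ι → ℝ := fun i => (a i - (1 - θ) * ∫ y, g i y ∂ν) / θ
  have he : (fun i _ => e i) ∈ SimplexWeights d ι := by
    refine ⟨fun i => measurable_const, fun i y => ?_, fun y => ?_⟩
    · refine div_nonneg ?_ hθ0.le
      have h1 := (abs_le.1 (hu i)).1
      have h2 := ha i
      have h3 : (1 - θ) * (-(θ * a i)) ≤ (1 - θ) * (a i - ∫ y, g i y ∂ν) :=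
        mul_le_mul_of_nonneg_left h1 (by linarith)
      nlinarith [mul_pos (mul_pos hθ0 hθ0) h2]
    · simp only [e]
      rw [← Finset.sum_div, Finset.sum_sub_distrib, ← Finset.mul_sum, husum, hsum]
      field_simp
      ring
  have hcombo := massCorr_combo hg he hν x (1 - θ) θ
  refine ⟨_, SimplexWeights.combo hg he (sub_nonneg.2 hθ1.le) hθ0.le (by ring), fun i => ?_, ?_⟩
  · have := congrFun (congrArg Prod.fst hcombo) i
    simp only [massCorr, Prod.fst_add, Prod.smul_fst, Pi.add_apply, Pi.smul_apply, smul_eq_mul,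
      integral_const, probReal_univ, one_mul] at this
    rw [this]
    simp only [e]
    field_simp
    ring
  · have h0 : (massCorr ν x (fun i _ => e i)).2 = 0 := by
      refine Finset.sum_eq_zero fun i _ => ?_
      rw [integral_smul, hν0, smul_zero, inner_zero_right]
    have := congrArg Prod.snd hcombo
    rw [Prod.snd_add, Prod.smul_snd, Prod.smul_snd, h0, smul_zero, add_zero, smul_eq_mul] at this
    change s - ε ≤ (massCorr ν x _).2
    rw [this]
    have h1 := (abs_lt.1 hd2).2
    have h2 := (abs_lt.1 hd3).1
    have h3 := le_abs_self s
    change s - ε ≤ (1 - θ) * t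
    nlinarith [mul_le_mul_of_nonneg_left (show t ≤ |s| + 1 by linarith) hθ0.le]

end weights

/-! ### Couplings with almost maximal correlation -/

/-- Finite partition into cells of positive mass and small total quadratic oscillation. -/
lemma exists_partition {d : ℕ} {μ : Measure (Rd d)} [IsProbabilityMeasure μ]
    (hμ : FiniteSecondMoment μ) {ε : ℝ} (hε : 0 < ε) :
    ∃ (ι : Type) (_ : Fintype ι) (_ : Nonempty ι) (A : ι → Set (Rd d)) (v : ι → Rd d),
      (∀ i, MeasurableSet (A i)) ∧ Pairwise (Function.onFun Disjoint A) ∧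
      ⋃ i, A i = Set.univ ∧ (∀ i, 0 < μ.real (A i)) ∧
      ∑ i, ∫ x in A i, ‖x - v i‖ ^ 2 ∂μ ≤ ε := by
  classical
  have hε' : ENNReal.ofReal (√ε) ≠ 0 := by
    rw [Ne, ENNReal.ofReal_eq_zero, not_le]
    exact Real.sqrt_pos.2 hε
  obtain ⟨T, hT, hTL⟩ := hμ.memLp.exists_simpleFunc_eLpNorm_sub_lt ENNReal.ofNat_ne_top hε'
  have hcost : ∫ x, ‖x - T x‖ ^ 2 ∂μ ≤ ε := by
    rw [(hμ.memLp.sub hTL).eLpNorm_eq_integral_rpow_norm two_ne_zero ENNReal.ofNat_ne_top,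
      ENNReal.ofReal_lt_ofReal_iff (Real.sqrt_pos.2 hε)] at hT
    simp only [ENNReal.toReal_ofNat, Real.rpow_ofNat, Pi.sub_apply] at hT
    rw [← one_div, ← Real.sqrt_eq_rpow] at hT
    exact (Real.sqrt_lt_sqrt_iff_of_pos hε).1 hT |>.le
  let I : Finset (Rd d) := T.range.filter fun w => μ (T ⁻¹' {w}) ≠ 0
  have hae : ∀ᵐ x ∂μ, T x ∈ I := by
    have h0 : μ (⋃ w ∈ T.range.filter fun w => μ (T ⁻¹' {w}) = 0, T ⁻¹' {w}) = 0 := by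
      refine (measure_biUnion_null_iff (Finset.countable_toSet _)).2 fun w hw => ?_
      exact (Finset.mem_filter.1 hw).2
    refine measure_mono_null (fun x hx => ?_) h0
    simp only [Set.mem_compl_iff, Set.mem_ofPred_eq, I, Finset.mem_filter, not_and, not_not] at hx
    simp only [Set.mem_iUnion]
    exact ⟨T x, Finset.mem_filter.2 ⟨T.mem_range_self x, hx (T.mem_range_self x)⟩, rfl⟩
  obtain ⟨x₀, hx₀⟩ := hae.exists
  -- Values taken with probability zero are merged into the cell of an arbitrary index.
  let φ : Rd d → I := fun w => if h : w ∈ I then ⟨w, h⟩ else ⟨T x₀, hx₀⟩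
  have hφ : ∀ w (h : w ∈ I), φ w = ⟨w, h⟩ := fun w h => dif_pos h
  have hm : ∀ i : I, MeasurableSet (T ⁻¹' (φ ⁻¹' {i})) := fun i => T.measurableSet_preimage _
  have hdisj : Pairwise (Function.onFun Disjoint fun i : I => T ⁻¹' (φ ⁻¹' {i})) := by
    intro i j hij
    refine Set.disjoint_left.2 fun x hx hx' => hij ?_
    exact (Eq.symm hx).trans hx'
  have hcov : ⋃ i : I, T ⁻¹' (φ ⁻¹' {i}) = Set.univ :=
    Set.eq_univ_of_forall fun x => Set.mem_iUnion.2 ⟨φ (T x), rfl⟩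
  refine ⟨I, inferInstance, ⟨⟨T x₀, hx₀⟩⟩, fun i => T ⁻¹' (φ ⁻¹' {i}), fun i => i, hm, hdisj,
    hcov, fun i => ?_, ?_⟩
  · refine ENNReal.toReal_pos ?_ (measure_ne_top _ _)
    have hi := (Finset.mem_filter.1 i.2).2
    refine fun h => hi (measure_mono_null (fun x hx => ?_) h)
    have hx' : T x = i := hx
    change φ (T x) = i
    rw [hx', hφ _ i.2]
  · rw [integral_eq_sum_setIntegral hm hdisj hcov
      (integrable_norm_sub_sq hμ.memLp hTL)] at hcost
    refine le_trans (le_of_eq ?_) hcost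
    refine Finset.sum_congr rfl fun i _ => setIntegral_congr_ae (hm i) ?_
    filter_upwards [hae] with x hx hxi
    have hxi' : φ (T x) = i := hxi
    rw [← hxi', hφ _ hx]

/-- The weights `g` transport the cell `A i` onto `g i • ν`, independently within the cell. The
correlation of this coupling only sees the barycenters of the cells. -/
lemma exists_coupling_of_weights {d : ℕ} {ι : Type} [Fintype ι] {μ ν : Measure (Rd d)}
    [IsProbabilityMeasure μ] [IsProbabilityMeasure ν] (hμ : FiniteSecondMoment μ)
    (hν : FiniteSecondMoment ν) {A : ι → Set (Rd d)} (hA : ∀ i, MeasurableSet (A i))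
    (hdisj : Pairwise (Function.onFun Disjoint A)) (hcov : ⋃ i, A i = Set.univ)
    (hpos : ∀ i, 0 < μ.real (A i)) {g : ι → Rd d → ℝ} (hg : g ∈ SimplexWeights d ι)
    (hmass : ∀ i, ∫ y, g i y ∂ν = μ.real (A i)) :
    ∃ π : Measure (Rd d × Rd d), IsCoupling π μ ν ∧
      ∫ p, ⟪p.1, p.2⟫ ∂π
        = ∑ i, ⟪(μ.real (A i))⁻¹ • ∫ z in A i, z ∂μ, ∫ y, g i y • y ∂ν⟫ := by
  let q : ι → Rd d → ENNReal := fun i y => ENNReal.ofReal ((μ.real (A i))⁻¹ * g i y)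
  have hqm : ∀ i, Measurable (q i) := fun i => ((hg.1 i).const_mul _).ennreal_ofReal
  have hq0 : ∀ i y, 0 ≤ (μ.real (A i))⁻¹ * g i y := fun i y =>
    mul_nonneg (inv_nonneg.2 (hpos i).le) (hg.2.1 i y)
  have hqr : ∀ i y, (q i y).toReal = (μ.real (A i))⁻¹ * g i y := fun i y =>
    ENNReal.toReal_ofReal (hq0 i y)
  have hqtop : ∀ i, ∀ᵐ y ∂ν, q i y < ⊤ := fun i => ae_of_all _ fun y => ENNReal.ofReal_lt_top
  have hq1 : ∀ i, ν.withDensity (q i) Set.univ = 1 := fun i => by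
    rw [withDensity_apply _ MeasurableSet.univ, Measure.restrict_univ,
      ← ofReal_integral_eq_lintegral_ofReal ((SimplexWeights.integrable hg ν i).const_mul _)
        (ae_of_all _ (hq0 i)), integral_const_mul, hmass, inv_mul_cancel₀ (hpos i).ne',
      ENNReal.ofReal_one]
  have hprob : ∀ i, IsProbabilityMeasure (ν.withDensity (q i)) := fun i => ⟨hq1 i⟩
  have hmean_int : ∀ i, Integrable (fun y : Rd d => y) (ν.withDensity (q i)) := fun i => by
    rw [integrable_withDensity_iff_integrable_smul' (hqm i) (hqtop i)]
    simp only [hqr, mul_smul]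
    exact (SimplexWeights.integrable_smul hg hν.integrable_id i).smul (μ.real (A i))⁻¹
  have hmean : ∀ i, ∫ y, y ∂ν.withDensity (q i)
      = (μ.real (A i))⁻¹ • ∫ y, g i y • y ∂ν := fun i => by
    rw [integral_withDensity_eq_integral_toReal_smul (hqm i) (hqtop i), ← integral_smul]
    simp only [hqr, mul_smul]
  have hint : ∀ i, Integrable (fun p : Rd d × Rd d => ⟪p.1, p.2⟫)
      ((μ.restrict (A i)).prod (ν.withDensity (q i))) := fun i =>
    Integrable.op_fst_snd (op := fun x y : Rd d => ⟪x, y⟫) (by fun_prop)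
      ⟨1, fun x y => by rw [one_mul]; exact norm_inner_le_norm x y⟩
      hμ.integrable_id.integrableOn (hmean_int i)
  refine ⟨∑ i, (μ.restrict (A i)).prod (ν.withDensity (q i)), ⟨?_, ?_⟩, ?_⟩
  · rw [Measure.map_finset_sum' measurable_fst.aemeasurable]
    simp only [Measure.map_fst_prod, hq1, one_smul]
    rw [← Measure.sum_fintype, ← Measure.restrict_iUnion hdisj hA, hcov, Measure.restrict_univ]
  · rw [Measure.map_finset_sum' measurable_snd.aemeasurable]
    simp only [Measure.map_snd_prod, Measure.restrict_apply_univ]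
    have : ∀ i, μ (A i) • ν.withDensity (q i)
        = ν.withDensity fun y => ENNReal.ofReal (g i y) := fun i => by
      rw [← withDensity_smul _ (hqm i)]
      congr 1
      ext y
      simp only [Pi.smul_apply, smul_eq_mul, q]
      rw [← ofReal_measureReal (measure_ne_top _ _), ← ENNReal.ofReal_mul (hpos i).le,
        mul_inv_cancel_left₀ (hpos i).ne']
    simp only [this]
    rw [← Measure.sum_fintype, ← withDensity_tsum fun i => (hg.1 i).ennreal_ofReal, tsum_fintype]
    have h1 : (∑ i, fun y => ENNReal.ofReal (g i y)) = 1 := by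
      ext y
      rw [Finset.sum_apply, ← ENNReal.ofReal_sum_of_nonneg fun i _ => hg.2.1 i y, hg.2.2]
      simp
    rw [h1, withDensity_one]
  · rw [integral_finsetSum_measure fun i _ => hint i]
    refine Finset.sum_congr rfl fun i _ => ?_
    have := integral_prod_bilin (innerSL ℝ (E := Rd d)) (f := fun x => x) (g := fun y => y)
      (hμ.integrable_id.integrableOn (s := A i)) (hmean_int i)
    refine this.trans ?_
    rw [innerSL_apply_apply, hmean, inner_smul_right, real_inner_smul_left]

/-- If `μ ≤_c ν`, some coupling has correlation almost as large as that of a martingale coupling,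
for which `∫ ⟪x, y⟫ = ∫ ‖x‖ ^ 2`. -/
lemma exists_coupling_inner {d : ℕ} {μ ν : Measure (Rd d)}
    [IsProbabilityMeasure μ] [IsProbabilityMeasure ν] (hμ : FiniteSecondMoment μ)
    (hν : FiniteSecondMoment ν) (hν0 : (∫ y, y ∂ν) = 0) (hord : ConvexOrder μ ν)
    {ε : ℝ} (hε : 0 < ε) :
    ∃ π : Measure (Rd d × Rd d), IsCoupling π μ ν ∧
      ∫ x, ‖x‖ ^ 2 ∂μ - ε ≤ ∫ p, ⟪p.1, p.2⟫ ∂π := by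
  obtain ⟨ι, _, _, A, v, hA, hdisj, hcov, hpos, hosc⟩ := exists_partition hμ (half_pos hε)
  set x : ι → Rd d := fun i => (μ.real (A i))⁻¹ • ∫ z in A i, z ∂μ with hx
  have hsum : ∑ i, μ.real (A i) = 1 := by
    have := integral_eq_sum_setIntegral (μ := μ) hA hdisj hcov
      (integrable_const (1 : ℝ))
    simpa using this.symm
  obtain ⟨g, hg, hmass, hcorr⟩ := exists_weights_mass_eq hν hν0 hpos hsum
    (mem_closure_massCorr hμ hν hord hA hdisj hcov x) (half_pos hε)
  obtain ⟨π, hπ, hval⟩ := exists_coupling_of_weights hμ hν hA hdisj hcov hpos hg hmass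
  refine ⟨π, hπ, ?_⟩
  rw [hval]
  refine le_trans ?_ hcorr
  -- Barycenters approximate each cell at least as well as the points `v i`.
  have hcell : ∀ i, ∫ z in A i, ‖z‖ ^ 2 ∂μ - ∫ z in A i, ‖z - v i‖ ^ 2 ∂μ
      ≤ ⟪x i, ∫ z in A i, z ∂μ⟫ := fun i => by
    have iz : Integrable (fun z : Rd d => z) (μ.restrict (A i)) := hμ.integrable_id.integrableOn
    have hM : ∫ z in A i, z ∂μ = μ.real (A i) • x i := by
      simp only [hx, smul_inv_smul₀ (hpos i).ne']
    have e : ∫ z in A i, ‖z - v i‖ ^ 2 ∂μ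
        = ∫ z in A i, ‖z‖ ^ 2 ∂μ - 2 * ⟪v i, ∫ z in A i, z ∂μ⟫ + μ.real (A i) * ‖v i‖ ^ 2 := by
      have h := integral_norm_sub_sq (hμ.memLp.restrict (A i))
        (memLp_const (μ := μ.restrict (A i)) (v i))
      simp only [real_inner_comm (v i)] at h
      rw [h, integral_inner iz, setIntegral_const, smul_eq_mul]
    rw [e, hM, real_inner_smul_right (v i) (x i), real_inner_smul_right (x i) (x i), real_inner_self_eq_norm_sq]
    have h1 := real_inner_le_norm (v i) (x i)
    have h2 : 2 * ⟪v i, x i⟫ - ‖v i‖ ^ 2 ≤ ‖x i‖ ^ 2 := by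
      nlinarith [sq_nonneg (‖v i‖ - ‖x i‖)]
    nlinarith [mul_le_mul_of_nonneg_left h2 (hpos i).le]
  have := Finset.sum_le_sum fun i (_ : i ∈ Finset.univ) => hcell i
  rw [Finset.sum_sub_distrib, ← integral_eq_sum_setIntegral hA hdisj hcov hμ] at this
  linarith

/-! ### Transport cost and variance -/

lemma Var_le {d : ℕ} {μ : Measure (Rd d)} [IsProbabilityMeasure μ]
    (hμ : FiniteSecondMoment μ) : Var μ ≤ ∫ x, ‖x‖ ^ 2 ∂μ := by
  set m := ∫ y, y ∂μ with hm
  have e : Var μ = ∫ z, ‖z‖ ^ 2 ∂μ - 2 * ⟪m, m⟫ + ‖m‖ ^ 2 := by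
    have h := integral_norm_sub_sq hμ.memLp (memLp_const (μ := μ) m)
    simp only [real_inner_comm m] at h
    rw [integral_inner hμ.integrable_id, integral_const, probReal_univ, one_smul] at h
    exact h
  rw [e, real_inner_self_eq_norm_sq]
  nlinarith [sq_nonneg ‖m‖]

/-- For `μ ≤_c ν`, the quadratic transport cost is at most `Var ν - Var μ`. -/
lemma exists_coupling_cost_le {d : ℕ} {μ ν : Measure (Rd d)}
    [IsProbabilityMeasure μ] [IsProbabilityMeasure ν] (hμ : FiniteSecondMoment μ)
    (hν : FiniteSecondMoment ν) (hν0 : (∫ y, y ∂ν) = 0) (hord : ConvexOrder μ ν)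
    {ε : ℝ} (hε : 0 < ε) :
    ∃ π : Measure (Rd d × Rd d), IsCoupling π μ ν ∧
      ∫ p, ‖p.1 - p.2‖ ^ 2 ∂π ≤ Var ν - Var μ + ε := by
  obtain ⟨π, hπ, hle⟩ := exists_coupling_inner hμ hν hν0 hord (half_pos hε)
  refine ⟨π, hπ, ?_⟩
  have l1 := memLp_comp_of_map_eq measurable_fst hπ.1 hμ
  have l2 := memLp_comp_of_map_eq measurable_snd hπ.2 hν
  have mn : AEStronglyMeasurable (fun x : Rd d => ‖x‖ ^ 2) (π.map Prod.fst) := by fun_prop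
  have mn' : AEStronglyMeasurable (fun x : Rd d => ‖x‖ ^ 2) (π.map Prod.snd) := by fun_prop
  have e1 : ∫ p, ‖p.1‖ ^ 2 ∂π = ∫ x, ‖x‖ ^ 2 ∂μ := by
    rw [← hπ.1, integral_map measurable_fst.aemeasurable mn]
  have e2 : ∫ p, ‖p.2‖ ^ 2 ∂π = ∫ x, ‖x‖ ^ 2 ∂ν := by
    rw [← hπ.2, integral_map measurable_snd.aemeasurable mn']
  have e : ∫ p, ‖p.1 - p.2‖ ^ 2 ∂π
      = ∫ x, ‖x‖ ^ 2 ∂μ - 2 * ∫ p, ⟪p.1, p.2⟫ ∂π + ∫ x, ‖x‖ ^ 2 ∂ν := by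
    rw [← e1, ← e2, integral_norm_sub_sq l1 l2]
  have hVν : Var ν = ∫ x, ‖x‖ ^ 2 ∂ν := by simp [Var, hν0]
  rw [e, hVν]
  linarith [Var_le hμ]

lemma exists_coupling_lt {d : ℕ} {μ ν : Measure (Rd d)} [IsProbabilityMeasure μ]
    [IsProbabilityMeasure ν] {r : ℝ} (h : W2sq μ ν < r) :
    ∃ π : Measure (Rd d × Rd d), IsCoupling π μ ν ∧ ∫ p, ‖p.1 - p.2‖ ^ 2 ∂π < r := by
  have hne : {π : Measure (Rd d × Rd d) | IsCoupling π μ ν}.Nonempty :=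
    ⟨μ.prod ν, by simp [IsCoupling]⟩
  obtain ⟨_, ⟨π, hπ, rfl⟩, hlt⟩ := exists_lt_of_csInf_lt (hne.image _) h
  exact ⟨π, hπ, hlt⟩

lemma le_sq_sqrt_self (r : ℝ) : r ≤ √r ^ 2 := by
  rcases le_total 0 r with h | h
  · rw [Real.sq_sqrt h]
  · exact h.trans (sq_nonneg _)

/-- If `μ*` maximizes the variance over `{μ ∈ D : μ ≤_c ν}` with `ν ∈ P_{2,0}(ℝ^d)`, then for
every `ρ ∈ D` with `ρ ≤_c ν`, `W₂(μ*, ρ) ≤ √(Var(ν) - Var(ρ)) + W₂(ν, ρ)`. -/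
theorem stmt_5 {d : ℕ} (ν : Measure (Rd d)) [IsProbabilityMeasure ν]
    (hν2 : FiniteSecondMoment ν) (hν0 : (∫ y, y ∂ν) = 0)
    (D : Set (Measure (Rd d)))
    (hD : ∀ ρ ∈ D, IsProbabilityMeasure ρ ∧ FiniteSecondMoment ρ)
    (μstar : Measure (Rd d)) (hμD : μstar ∈ D) (hμord : ConvexOrder μstar ν)
    (hmax : ∀ ρ ∈ D, ConvexOrder ρ ν → Var ρ ≤ Var μstar)
    (ρ : Measure (Rd d)) (hρD : ρ ∈ D) (hρord : ConvexOrder ρ ν) :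
    W2 μstar ρ ≤ Real.sqrt (Var ν - Var ρ) + W2 ν ρ := by
  obtain ⟨iμ, hμ2⟩ := hD μstar hμD
  obtain ⟨iρ, hρ2⟩ := hD ρ hρD
  refine le_of_forall_pos_le_add fun δ hδ => ?_
  have hδ2 : 0 < (δ / 2) ^ 2 := by positivity
  obtain ⟨π₁, hπ₁, hc₁⟩ := exists_coupling_cost_le hμ2 hν2 hν0 hμord hδ2
  obtain ⟨π₂, hπ₂, hc₂⟩ := exists_coupling_lt (lt_add_of_pos_right (W2sq ν ρ) hδ2)
  have hV := hmax ρ hρD hρord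
  have s1 : 0 ≤ √(Var ν - Var ρ) := Real.sqrt_nonneg _
  have s2 : 0 ≤ √(W2sq ν ρ) := Real.sqrt_nonneg _
  have hA : ∫ p, ‖p.1 - p.2‖ ^ 2 ∂π₁ ≤ (√(Var ν - Var ρ) + δ / 2) ^ 2 := by
    nlinarith [le_sq_sqrt_self (Var ν - Var ρ)]
  have hB : ∫ p, ‖p.1 - p.2‖ ^ 2 ∂π₂ ≤ (√(W2sq ν ρ) + δ / 2) ^ 2 := by
    nlinarith [le_sq_sqrt_self (W2sq ν ρ)]
  have := W2_le_add hμ2 hν2 hρ2 hπ₁ hπ₂ (by positivity) (by positivity) hA hB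
  rw [show W2 ν ρ = √(W2sq ν ρ) from rfl]
  linarith
end
end

section
/- Let D_MON be the set of probability measures on ℝ² supported on a monotone set, where a set Γ ⊂ ℝ² is monotone if (y₁ − x₁)(y₂ − x₂) ≥ 0 for all (x₁,x₂), (y₁,y₂) ∈ Γ. Then D_MON is closed under the 2-Wasserstein metric: if μ_n ∈ D_MON for all n and W_2(μ_n, μ) → 0, then μ ∈ D_MON. -/
/-!
Suppose two points `p, q` of the support of `μ` violate monotonicity. Violation is an open condition
on pairs, so every pair in `ball p r × ball q r` violates it for some `r > 0`. The balls of radius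
`r / 2` around `p` and `q` have positive `μ`-measure. If `μs n` gave no mass to `ball p r`, any
coupling of `μs n` with `μ` would have to move all the `μ`-mass of `ball p (r / 2)` by at least
`r / 2`, so that `W₂² ≥ (r / 2)² μ (ball p (r / 2))` (`mul_measureReal_ball_le_W2sq`). Hence for
large `n` both balls of radius `r` are charged by `μs n`, so each contains a point of the support of
`μs n` (`exists_mem_mSupport_of_measure_ne_zero`), and these two points contradict the monotonicity
of that support.
-/

open MeasureTheory Filter
open scoped RealInnerProductSpace Topology

noncomputable section

/-- A set `Γ ⊆ ℝ²` is monotone if `(y₁ - x₁)(y₂ - x₂) ≥ 0` for all points of `Γ`. -/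
def MonotoneSet (Γ : Set (Rd 2)) : Prop :=
  ∀ p ∈ Γ, ∀ q ∈ Γ, 0 ≤ (q 0 - p 0) * (q 1 - p 1)

/-- The (topological) support of a measure: points all of whose neighbourhoods have
positive measure. -/
def mSupport {d : ℕ} (μ : Measure (Rd d)) : Set (Rd d) := {x | ∀ s ∈ 𝓝 x, μ s ≠ 0}

/-- A set of positive measure meets the support. -/
theorem exists_mem_mSupport_of_measure_ne_zero {d : ℕ} {ν : Measure (Rd d)} {s : Set (Rd d)}
    (h : ν s ≠ 0) : ∃ x ∈ s, x ∈ mSupport ν := by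
  obtain ⟨x, hx, hpos⟩ := exists_mem_forall_mem_nhdsWithin_pos_measure h
  refine ⟨x, hx, fun t ht => (hpos t ?_).ne'⟩
  exact mem_nhdsWithin_of_mem_nhds ht

theorem IsCoupling.integrable_cost {d : ℕ} {μ ν : Measure (Rd d)} {π : Measure (Rd d × Rd d)}
    (hπ : IsCoupling π μ ν) (hμ : FiniteSecondMoment μ) (hν : FiniteSecondMoment ν) :
    Integrable (fun z : Rd d × Rd d => ‖z.1 - z.2‖ ^ 2) π := by
  obtain ⟨rfl, rfl⟩ := hπ
  have h1 : Integrable (fun z : Rd d × Rd d => ‖z.1‖ ^ 2) π :=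
    Integrable.comp_measurable (g := fun x : Rd d => ‖x‖ ^ 2) hμ measurable_fst
  have h2 : Integrable (fun z : Rd d × Rd d => ‖z.2‖ ^ 2) π :=
    Integrable.comp_measurable (g := fun x : Rd d => ‖x‖ ^ 2) hν measurable_snd
  refine ((h1.add h2).const_mul 2).mono'
    (by fun_prop : Continuous fun z : Rd d × Rd d => ‖z.1 - z.2‖ ^ 2).aestronglyMeasurable
    (Eventually.of_forall fun z => ?_)
  have := norm_sub_le z.1 z.2
  simp only [norm_pow, norm_norm, Pi.add_apply]
  nlinarith [norm_nonneg (z.1 - z.2), sq_nonneg (‖z.1‖ - ‖z.2‖)]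

/-- If `μ` does not charge a ball, then the mass that `ν` puts in the concentric ball of half the
radius has to travel at least the other half, which bounds the cost of any coupling from below. -/
theorem IsCoupling.mul_measureReal_ball_le_cost {d : ℕ} {μ ν : Measure (Rd d)}
    {π : Measure (Rd d × Rd d)} (hπ : IsCoupling π μ ν)
    [IsProbabilityMeasure μ]
    (hμ : FiniteSecondMoment μ) (hν : FiniteSecondMoment ν) {p : Rd d} {r : ℝ} (hr : 0 < r)
    (h0 : μ (Metric.ball p r) = 0) :
    (r / 2) ^ 2 * ν.real (Metric.ball p (r / 2)) ≤ ∫ z, ‖z.1 - z.2‖ ^ 2 ∂π := by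
  have hint := hπ.integrable_cost hμ hν
  have : IsProbabilityMeasure (π.map Prod.fst) := by
    rw [hπ.1]
    infer_instance
  have : IsProbabilityMeasure π :=
    Measure.isProbabilityMeasure_of_map Prod.fst
  rw [← hπ.1, Measure.map_apply measurable_fst measurableSet_ball] at h0
  have hle : ν.real (Metric.ball p (r / 2)) ≤
      π.real {z : Rd d × Rd d | (r / 2) ^ 2 ≤ ‖z.1 - z.2‖ ^ 2} := by
    rw [← hπ.2, map_measureReal_apply measurable_snd measurableSet_ball]
    refine ENNReal.toReal_mono (measure_ne_top _ _) (measure_mono_ae ?_)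
    filter_upwards [measure_eq_zero_iff_ae_notMem.1 h0] with z hz1 hz2
    have hz1' : r ≤ dist z.1 p := not_lt.1 fun h => hz1 (Metric.mem_ball.2 h)
    have hz2' : dist z.2 p < r / 2 := Metric.mem_ball.1 hz2
    have htri := dist_triangle z.1 z.2 p
    have hd : r / 2 ≤ ‖z.1 - z.2‖ := by
      rw [← dist_eq_norm]
      linarith
    exact pow_le_pow_left₀ (half_pos hr).le hd 2
  -- Markov's inequality for the cost.
  have hnonneg : 0 ≤ᵐ[π] fun z : Rd d × Rd d => ‖z.1 - z.2‖ ^ 2 :=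
    Eventually.of_forall fun z => by positivity
  have hmarkov := mul_meas_ge_le_integral_of_nonneg hnonneg hint ((r / 2) ^ 2)
  exact (mul_le_mul_of_nonneg_left hle (sq_nonneg _)).trans hmarkov

theorem mul_measureReal_ball_le_W2sq {d : ℕ} {μ ν : Measure (Rd d)}
    [IsProbabilityMeasure μ] [IsProbabilityMeasure ν]
    (hμ : FiniteSecondMoment μ) (hν : FiniteSecondMoment ν) {p : Rd d} {r : ℝ} (hr : 0 < r)
    (h0 : μ (Metric.ball p r) = 0) :
    (r / 2) ^ 2 * ν.real (Metric.ball p (r / 2)) ≤ W2sq μ ν := by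
  -- The infimum is over a nonempty set: the product measure is a coupling.
  have hprod : IsCoupling (μ.prod ν) μ ν := ⟨by simp, by simp⟩
  refine le_csInf (Set.Nonempty.image _ ⟨μ.prod ν, hprod⟩) ?_
  rintro _ ⟨π, hπ, rfl⟩
  exact hπ.mul_measureReal_ball_le_cost hμ hν hr h0

/-- A ball centred in the support of a `W₂`-limit eventually meets the supports of the sequence. -/
theorem eventually_exists_mem_mSupport {d : ℕ} {μs : ℕ → Measure (Rd d)} {μ : Measure (Rd d)}
    [IsProbabilityMeasure μ] (hprob : ∀ n, IsProbabilityMeasure (μs n))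
    (hmom : ∀ n, FiniteSecondMoment (μs n)) (hμ2 : FiniteSecondMoment μ)
    (hconv : Tendsto (fun n => W2 (μs n) μ) atTop (𝓝 0))
    {p : Rd d} (hp : p ∈ mSupport μ) {r : ℝ} (hr : 0 < r) :
    ∀ᶠ n in atTop, ∃ x ∈ Metric.ball p r, x ∈ mSupport (μs n) := by
  have hpos : 0 < (r / 2) ^ 2 * μ.real (Metric.ball p (r / 2)) :=
    mul_pos (by positivity) (ENNReal.toReal_pos (hp _ (Metric.ball_mem_nhds p (half_pos hr)))
      (measure_ne_top _ _))
  filter_upwards [hconv.eventually_lt_const (Real.sqrt_pos.2 hpos)] with n hn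
  refine exists_mem_mSupport_of_measure_ne_zero fun h0 => ?_
  have := hprob n
  exact hn.not_ge (Real.sqrt_le_sqrt (mul_measureReal_ball_le_W2sq (hmom n) hμ2 hr h0))

/-- `D_MON`, the set of probability measures on `ℝ²` supported on a monotone set, is closed
under the `W₂` metric. -/
theorem stmt_7 (μs : ℕ → Measure (Rd 2)) (μ : Measure (Rd 2))
    (hprob : ∀ n, IsProbabilityMeasure (μs n))
    (hmom : ∀ n, FiniteSecondMoment (μs n))
    [IsProbabilityMeasure μ] (hμ2 : FiniteSecondMoment μ)
    (hmon : ∀ n, ∃ Γ : Set (Rd 2), MonotoneSet Γ ∧ mSupport (μs n) ⊆ Γ)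
    (hconv : Tendsto (fun n => W2 (μs n) μ) atTop (𝓝 0)) :
    ∃ Γ : Set (Rd 2), MonotoneSet Γ ∧ mSupport μ ⊆ Γ := by
  refine ⟨mSupport μ, fun p hp q hq => ?_, subset_rfl⟩
  by_contra! hneg
  have hopen : IsOpen {z : Rd 2 × Rd 2 | (z.2 0 - z.1 0) * (z.2 1 - z.1 1) < 0} :=
    isOpen_lt (by fun_prop) continuous_const
  obtain ⟨r, hr, hball⟩ := Metric.isOpen_iff.1 hopen (p, q) hneg
  obtain ⟨n, ⟨x, hx, hxs⟩, y, hy, hys⟩ :=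
    ((eventually_exists_mem_mSupport hprob hmom hμ2 hconv hp hr).and
      (eventually_exists_mem_mSupport hprob hmom hμ2 hconv hq hr)).exists
  obtain ⟨Γ, hΓ, hsub⟩ := hmon n
  have hxy : (x, y) ∈ Metric.ball (p, q) r := by
    rw [← ball_prod_same]
    exact ⟨hx, hy⟩
  exact (hΓ x (hsub hxs) y (hsub hys)).not_gt (hball hxy)
end
end

section
/- Let ν ∈ P_{2,0}(ℝ^d) and μ ∈ P_2(ℝ^d). If μ ≤_c ν (convex order), then μ ≼_K ν, i.e., there exists a coupling π ∈ Π(μ,ν) with ∫⟨x, y − x⟩ dπ(x,y) = 0. In other words, Kantorovich dominance is a relaxation of the convex order. -/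
/-!
The proof is a Hahn–Banach argument that does not pass through Strassen's theorem.
On the space of continuous functions of at most quadratic growth on `ℝ^d × ℝ^d`, consider the
functional `f(x) + g(y) + c⟨x, y - x⟩ ↦ ∫ f dμ + ∫ g dν`. It is positive: if
`f(x) + g(y) + c⟨x, y - x⟩ ≥ 0` everywhere, then `φ(y) = sup_x (-f(x) - c⟨x, y - x⟩)` is convex, being
a supremum of affine functions of `y`, and satisfies `-f ≤ φ ≤ g`; hence
`∫ g dν ≥ ∫ φ dν ≥ ∫ φ dμ ≥ -∫ f dμ` by the convex order (`nonneg_of_convexOrder`).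

Positivity also makes the functional well defined, and M. Riesz' extension theorem extends it to a
positive functional `L` on the whole space (`exists_positive_extension`). The
Riesz–Markov–Kakutani theorem represents `L` by a measure `π` on compactly supported functions, and
since the marginals `μ` and `ν` of `L` have finite second moments, no mass of quadratic functions
escapes to infinity, so `π` represents `L` on the whole space (`exists_measure_of_positive`). Thus
`π` has marginals `μ` and `ν`, and `∫ ⟨x, y - x⟩ dπ = L ⟨x, y - x⟩ = 0`.
-/

open MeasureTheory Filter
open scoped RealInnerProductSpace Topology

noncomputable section

open scoped CompactlySupported

/-! ### Functions of quadratic growth -/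

/-- The space of continuous real functions on `X` bounded by a multiple of the weight `w`. -/
def weightedSpace {X : Type*} [TopologicalSpace X] (w : X → ℝ) : Submodule ℝ (X → ℝ) where
  carrier := {F | Continuous F ∧ ∃ C, ∀ x, |F x| ≤ C * w x}
  add_mem' := by
    rintro F G ⟨hF, C, hC⟩ ⟨hG, D, hD⟩
    refine ⟨hF.add hG, C + D, fun x => ?_⟩
    have := abs_add_le (F x) (G x)
    have := hC x
    have := hD x
    simp only [Pi.add_apply]
    linarith
  zero_mem' := ⟨continuous_const, 0, fun x => by simp⟩
  smul_mem' := by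
    rintro c F ⟨hF, C, hC⟩
    refine ⟨hF.const_smul c, |c| * C, fun x => ?_⟩
    have := mul_le_mul_of_nonneg_left (hC x) (abs_nonneg c)
    simp only [Pi.smul_apply, smul_eq_mul, abs_mul]
    linarith

/-- The quadratic weight on `ℝ^d`. -/
def quadWeight {d : ℕ} (x : Rd d) : ℝ := 1 + ‖x‖ ^ 2

/-- The quadratic weight on `ℝ^d × ℝ^d`. -/
def quadWeightProd {d : ℕ} (p : Rd d × Rd d) : ℝ := 1 + ‖p.1‖ ^ 2 + ‖p.2‖ ^ 2

/-- Continuous functions of at most quadratic growth on `ℝ^d`. -/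
abbrev Quad (d : ℕ) : Submodule ℝ (Rd d → ℝ) := weightedSpace quadWeight

/-- Continuous functions of at most quadratic growth on `ℝ^d × ℝ^d`. -/
abbrev QuadProd (d : ℕ) : Submodule ℝ (Rd d × Rd d → ℝ) := weightedSpace quadWeightProd

variable {d : ℕ}

lemma integrable_quadWeight {μ : Measure (Rd d)} [IsProbabilityMeasure μ]
    (hμ : FiniteSecondMoment μ) : Integrable (quadWeight (d := d)) μ :=
  (integrable_const (1 : ℝ)).add hμ

lemma integrable_of_quad {μ : Measure (Rd d)} [IsProbabilityMeasure μ]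
    (hμ : FiniteSecondMoment μ) {f : Rd d → ℝ} (hf : f ∈ Quad d) : Integrable f μ := by
  obtain ⟨hc, C, hC⟩ := hf
  exact ((integrable_quadWeight hμ).const_mul C).mono' hc.aestronglyMeasurable
    (ae_of_all _ hC)

lemma comp_fst_mem {f : Rd d → ℝ} (hf : f ∈ Quad d) :
    (fun p : Rd d × Rd d => f p.1) ∈ QuadProd d := by
  obtain ⟨hc, C, hC⟩ := hf
  refine ⟨hc.comp continuous_fst, |C|, fun p => (hC p.1).trans ?_⟩
  have h1 : 0 ≤ quadWeight p.1 := by unfold quadWeight; positivity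
  have h2 : quadWeight p.1 ≤ quadWeightProd p := by
    unfold quadWeight quadWeightProd; nlinarith [sq_nonneg ‖p.2‖]
  exact mul_le_mul (le_abs_self C) h2 h1 (abs_nonneg C)

lemma comp_snd_mem {f : Rd d → ℝ} (hf : f ∈ Quad d) :
    (fun p : Rd d × Rd d => f p.2) ∈ QuadProd d := by
  obtain ⟨hc, C, hC⟩ := hf
  refine ⟨hc.comp continuous_snd, |C|, fun p => (hC p.2).trans ?_⟩
  have h1 : 0 ≤ quadWeight p.2 := by unfold quadWeight; positivity
  have h2 : quadWeight p.2 ≤ quadWeightProd p := by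
    unfold quadWeight quadWeightProd; nlinarith [sq_nonneg ‖p.1‖]
  exact mul_le_mul (le_abs_self C) h2 h1 (abs_nonneg C)

lemma inner_sub_mem : (fun p : Rd d × Rd d => ⟪p.1, p.2 - p.1⟫) ∈ QuadProd d := by
  refine ⟨by fun_prop, 2, fun p => ?_⟩
  have h1 := abs_real_inner_le_norm p.1 (p.2 - p.1)
  have h2 := norm_sub_le p.2 p.1
  have h3 := mul_le_mul_of_nonneg_left h2 (norm_nonneg p.1)
  unfold quadWeightProd
  nlinarith [sq_nonneg (‖p.1‖ - ‖p.2‖), sq_nonneg ‖p.1‖, sq_nonneg ‖p.2‖]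

/-! ### The positive functional -/

/-- The dual inequality: the functional `f(x) + g(y) + c⟨x, y - x⟩ ↦ ∫ f dμ + ∫ g dν` is positive.
The convex function tested is `y ↦ sup_x (-f(x) - c⟨x, y - x⟩)`. -/
lemma nonneg_of_convexOrder {μ ν : Measure (Rd d)}
    [IsProbabilityMeasure μ] [IsProbabilityMeasure ν]
    (hμ2 : FiniteSecondMoment μ) (hν2 : FiniteSecondMoment ν) (h : ConvexOrder μ ν)
    {f g : Rd d → ℝ} (hf : f ∈ Quad d) (hg : g ∈ Quad d) (c : ℝ)
    (hpos : ∀ x y, 0 ≤ f x + g y + c * ⟪x, y - x⟫) :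
    0 ≤ ∫ x, f x ∂μ + ∫ y, g y ∂ν := by
  set φ : Rd d → ℝ := fun y => ⨆ x, (-f x - c * ⟪x, y - x⟫) with hφ
  have hbdd : ∀ y, BddAbove (Set.range fun x => -f x - c * ⟪x, y - x⟫) := by
    intro y
    refine ⟨g y, ?_⟩
    rintro _ ⟨x, rfl⟩
    have := hpos x y
    simp only
    linarith
  have hφg : ∀ y, φ y ≤ g y := fun y => ciSup_le fun x => by
    have := hpos x y
    linarith
  have hfφ : ∀ y, -f y ≤ φ y := fun y => by
    simpa using le_ciSup (hbdd y) y
  have hconv : ConvexOn ℝ Set.univ φ := by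
    refine ⟨convex_univ, fun y _ z _ a b ha hb hab => ?_⟩
    refine ciSup_le fun x => ?_
    have h1 := mul_le_mul_of_nonneg_left (le_ciSup (hbdd y) x) ha
    have h2 := mul_le_mul_of_nonneg_left (le_ciSup (hbdd z) x) hb
    have h3 : -f x - c * ⟪x, a • y + b • z - x⟫
        = a * (-f x - c * ⟪x, y - x⟫) + b * (-f x - c * ⟪x, z - x⟫) := by
      simp only [inner_sub_right, inner_add_right, inner_smul_right]
      linear_combination (f x - c * ⟪x, x⟫) * hab
    rw [h3]
    simp only [smul_eq_mul, hφ]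
    linarith
  have hcont : Continuous φ := by
    have := hconv.continuousOn isOpen_univ
    rwa [continuousOn_univ] at this
  have hφmem : φ ∈ Quad d := by
    obtain ⟨-, C, hC⟩ := hf
    obtain ⟨-, D, hD⟩ := hg
    refine ⟨hcont, C + D, fun y => ?_⟩
    have h1 := abs_le.1 (hC y)
    have h2 := abs_le.1 (hD y)
    have h3 := hfφ y
    have h4 := hφg y
    have h5 := (abs_nonneg _).trans (hC y)
    have h6 := (abs_nonneg _).trans (hD y)
    rw [abs_le]
    constructor <;> linarith
  have h1 := h φ hconv (integrable_of_quad hμ2 hφmem) (integrable_of_quad hν2 hφmem)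
  have h2 := integral_mono (integrable_of_quad hν2 hφmem) (integrable_of_quad hν2 hg) hφg
  have h3 : ∫ x, -f x ∂μ ≤ ∫ x, φ x ∂μ :=
    integral_mono (integrable_of_quad hμ2 hf).neg (integrable_of_quad hμ2 hφmem) hfφ
  rw [integral_neg] at h3
  linarith

/-- M. Riesz' extension theorem applied to the functional of `nonneg_of_convexOrder`. -/
lemma exists_positive_extension {μ ν : Measure (Rd d)}
    [IsProbabilityMeasure μ] [IsProbabilityMeasure ν]
    (hμ2 : FiniteSecondMoment μ) (hν2 : FiniteSecondMoment ν) (h : ConvexOrder μ ν) :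
    ∃ L : QuadProd d →ₗ[ℝ] ℝ, (∀ F : QuadProd d, (∀ p, 0 ≤ F.1 p) → 0 ≤ L F) ∧
      (∀ f (hf : f ∈ Quad d), L ⟨_, comp_fst_mem hf⟩ = ∫ x, f x ∂μ) ∧
      (∀ g (hg : g ∈ Quad d), L ⟨_, comp_snd_mem hg⟩ = ∫ y, g y ∂ν) ∧
      L ⟨_, inner_sub_mem⟩ = 0 := by
  let q : QuadProd d := ⟨_, inner_sub_mem⟩
  let T : Quad d × Quad d × ℝ →ₗ[ℝ] QuadProd d :=
    { toFun := fun w => ⟨_, comp_fst_mem w.1.2⟩ + ⟨_, comp_snd_mem w.2.1.2⟩ + w.2.2 • q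
      map_add' := by
        intro v w
        ext p
        simp [q]
        ring
      map_smul' := by
        intro c w
        ext p
        simp [q]
        ring }
  have hT : ∀ w p, (T w).1 p = w.1.1 p.1 + w.2.1.1 p.2 + w.2.2 * ⟪p.1, p.2 - p.1⟫ :=
    fun w p => rfl
  let l : Quad d × Quad d × ℝ →ₗ[ℝ] ℝ :=
    { toFun := fun w => ∫ x, w.1.1 x ∂μ + ∫ y, w.2.1.1 y ∂ν
      map_add' := by
        intro v w
        have h1 := integral_add (integrable_of_quad hμ2 v.1.2) (integrable_of_quad hμ2 w.1.2)
        have h2 := integral_add (integrable_of_quad hν2 v.2.1.2) (integrable_of_quad hν2 w.2.1.2)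
        simp only [Prod.fst_add, Prod.snd_add, Submodule.coe_add, Pi.add_apply]
        rw [h1, h2]
        ring
      map_smul' := by
        intro c w
        simp [integral_const_mul, mul_add] }
  have hl : ∀ w, l w = ∫ x, w.1.1 x ∂μ + ∫ y, w.2.1.1 y ∂ν := fun w => rfl
  have hlpos : ∀ w, (∀ p, 0 ≤ (T w).1 p) → 0 ≤ l w := fun w hw =>
    nonneg_of_convexOrder hμ2 hν2 h w.1.2 w.2.1.2 w.2.2 fun x y => hw (x, y)
  -- Positivity of `l` and of `-l` on the kernel of `T` lets `l` factor through `T`.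
  have hker : l ∈ (LinearMap.ker T).dualAnnihilator := by
    rw [Submodule.mem_dualAnnihilator]
    intro w hw
    rw [LinearMap.mem_ker] at hw
    apply le_antisymm
    · have := hlpos (-w) (fun p => by rw [map_neg, hw]; simp)
      rw [map_neg] at this
      linarith
    · exact hlpos w (fun p => by rw [hw]; simp)
  rw [← LinearMap.range_dualMap_eq_dualAnnihilator_ker] at hker
  obtain ⟨L₀, hL₀⟩ := hker
  have hL₀T : ∀ w, L₀ (T w) = l w := fun w => by rw [← hL₀]; rfl
  let s : PointedCone ℝ (QuadProd d) :=
    { carrier := {F | ∀ p, 0 ≤ F.1 p}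
      add_mem' := fun {F G} hF hG p => add_nonneg (hF p) (hG p)
      zero_mem' := fun p => le_rfl
      smul_mem' := fun c F hF p => mul_nonneg c.2 (hF p) }
  obtain ⟨L, hLext, hLpos⟩ := riesz_extension s ⟨LinearMap.range T, L₀.domRestrict _⟩
    (by
      rintro ⟨_, w, rfl⟩ hw
      change 0 ≤ L₀ (T w)
      rw [hL₀T]
      exact hlpos w hw)
    (by
      rintro ⟨F, hFc, C, hC⟩
      have hw1 : (fun x => C * (1 + ‖x‖ ^ 2)) ∈ Quad d :=
        ⟨by fun_prop, |C|, fun x => by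
          rw [abs_mul, quadWeight, abs_of_nonneg (by positivity : 0 ≤ 1 + ‖x‖ ^ 2)]⟩
      have hw2 : (fun x => C * ‖x‖ ^ 2) ∈ Quad d :=
        ⟨by fun_prop, |C|, fun x => by
          rw [abs_mul, quadWeight, abs_of_nonneg (by positivity : 0 ≤ ‖x‖ ^ 2)]
          nlinarith [abs_nonneg C]⟩
      refine ⟨⟨T (⟨_, hw1⟩, ⟨_, hw2⟩, 0), _, rfl⟩, fun p => ?_⟩
      have h1 := (abs_le.1 (hC p)).1
      change 0 ≤ C * (1 + ‖p.1‖ ^ 2) + C * ‖p.2‖ ^ 2 + 0 * ⟪p.1, p.2 - p.1⟫ + F p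
      unfold quadWeightProd at h1
      linarith)
  have hLT : ∀ w, L (T w) = l w := fun w => (hLext ⟨T w, w, rfl⟩).trans (hL₀T w)
  refine ⟨L, hLpos, fun f hf => ?_, fun g hg => ?_, ?_⟩
  · have h1 := hLT (⟨f, hf⟩, 0, 0)
    rw [hl] at h1
    have h2 : T (⟨f, hf⟩, 0, 0) = ⟨_, comp_fst_mem hf⟩ := by
      ext p
      simp [hT]
    rw [h2] at h1
    simpa using h1
  · have h1 := hLT (0, ⟨g, hg⟩, 0)
    rw [hl] at h1
    have h2 : T (0, ⟨g, hg⟩, 0) = ⟨_, comp_snd_mem hg⟩ := by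
      ext p
      simp [hT]
    rw [h2] at h1
    simpa using h1
  · have h1 := hLT (0, 0, 1)
    rw [hl] at h1
    have h2 : T (0, 0, 1) = ⟨_, inner_sub_mem⟩ := by
      ext p
      simp [hT]
    rw [h2] at h1
    simpa using h1

/-! ### Cutoffs and tails -/

/-- The radial cutoff profile: `1` for `r ≤ n - 1`, `0` for `r ≥ n`, affine in between. -/
def cutoff (n : ℕ) (r : ℝ) : ℝ := max 0 (min 1 (n - r))

lemma cutoff_nonneg (n : ℕ) (r : ℝ) : 0 ≤ cutoff n r := le_max_left _ _

lemma cutoff_le_one (n : ℕ) (r : ℝ) : cutoff n r ≤ 1 :=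
  max_le zero_le_one (min_le_left _ _)

lemma continuous_cutoff (n : ℕ) : Continuous (cutoff n) := by
  unfold cutoff; fun_prop

lemma tendsto_cutoff (r : ℝ) : Tendsto (fun n => cutoff n r) atTop (𝓝 1) := by
  refine tendsto_const_nhds.congr' ?_
  filter_upwards [eventually_ge_atTop ⌈r + 1⌉₊] with n hn
  have h1 : r + 1 ≤ n := Nat.ceil_le.1 hn
  unfold cutoff
  rw [min_eq_left (by linarith), max_eq_right zero_le_one]

/-- The part of the quadratic weight on `ℝ^d` cut away by `cutoff n`. -/
def tail (n : ℕ) (x : Rd d) : ℝ := (1 - cutoff n ‖x‖) * quadWeight x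

lemma tail_nonneg (n : ℕ) (x : Rd d) : 0 ≤ tail n x :=
  mul_nonneg (by linarith [cutoff_le_one n ‖x‖]) (by unfold quadWeight; positivity)

lemma tail_le (n : ℕ) (x : Rd d) : tail n x ≤ quadWeight x := by
  have h1 : 0 ≤ quadWeight x := by unfold quadWeight; positivity
  unfold tail
  nlinarith [cutoff_nonneg n ‖x‖]

lemma continuous_tail (n : ℕ) : Continuous (tail (d := d) n) := by
  have := (continuous_cutoff n).comp (continuous_norm (E := Rd d))
  unfold tail quadWeight
  exact (continuous_const.sub this).mul (by fun_prop)

lemma tail_mem (n : ℕ) : tail n ∈ Quad d :=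
  ⟨continuous_tail n, 1, fun x => by
    rw [abs_of_nonneg (tail_nonneg n x), one_mul]; exact tail_le n x⟩

lemma tendsto_integral_tail {μ : Measure (Rd d)} [IsProbabilityMeasure μ]
    (hμ : FiniteSecondMoment μ) : Tendsto (fun n => ∫ x, tail n x ∂μ) atTop (𝓝 0) := by
  have : Tendsto (fun n => ∫ x, tail n x ∂μ) atTop (𝓝 (∫ _, (0 : ℝ) ∂μ)) := by
    refine tendsto_integral_of_dominated_convergence quadWeight
      (fun n => (continuous_tail n).aestronglyMeasurable) (integrable_quadWeight hμ)
      (fun n => ae_of_all _ fun x => ?_) (ae_of_all _ fun x => ?_)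
    · rw [Real.norm_eq_abs, abs_of_nonneg (tail_nonneg n x)]
      exact tail_le n x
    · have := ((tendsto_cutoff ‖x‖).const_sub 1).mul_const (quadWeight x)
      simpa [tail] using this
  simpa using this

/-- With the sup norm on the product, the tail of the quadratic weight is controlled by the tails of
its marginals: on each region the larger of `‖x‖`, `‖y‖` bounds the whole weight. -/
lemma tail_prod_le (n : ℕ) (p : Rd d × Rd d) :
    (1 - cutoff n ‖p‖) * quadWeightProd p ≤ 2 * (tail n p.1 + tail n p.2) := by
  have h0 := cutoff_le_one n ‖p‖
  have h1 := tail_nonneg n p.1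
  have h2 := tail_nonneg n p.2
  rcases le_total ‖p.1‖ ‖p.2‖ with hle | hle
  · have hp : ‖p‖ = ‖p.2‖ := by rw [Prod.norm_def, max_eq_right hle]
    have h3 : quadWeightProd p ≤ 2 * quadWeight p.2 := by
      unfold quadWeight quadWeightProd; nlinarith [norm_nonneg p.1]
    have h4 := mul_le_mul_of_nonneg_left h3 (sub_nonneg.2 h0)
    have h5 : tail n p.2 = (1 - cutoff n ‖p‖) * quadWeight p.2 := by rw [hp, tail]
    linarith
  · have hp : ‖p‖ = ‖p.1‖ := by rw [Prod.norm_def, max_eq_left hle]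
    have h3 : quadWeightProd p ≤ 2 * quadWeight p.1 := by
      unfold quadWeight quadWeightProd; nlinarith [norm_nonneg p.2]
    have h4 := mul_le_mul_of_nonneg_left h3 (sub_nonneg.2 h0)
    have h5 : tail n p.1 = (1 - cutoff n ‖p‖) * quadWeight p.1 := by rw [hp, tail]
    linarith

lemma quadWeightProd_pos (p : Rd d × Rd d) : 0 < quadWeightProd p := by
  unfold quadWeightProd; positivity

lemma continuous_quadWeightProd : Continuous (quadWeightProd (d := d)) := by
  unfold quadWeightProd; fun_prop

lemma hasCompactSupport_cutoff_mul (n : ℕ) (F : Rd d × Rd d → ℝ) :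
    HasCompactSupport (fun p => cutoff n ‖p‖ * F p) := by
  refine HasCompactSupport.intro (isCompact_closedBall (0 : Rd d × Rd d) n) fun p hp => ?_
  have h1 : (n : ℝ) < ‖p‖ := by simpa using hp
  have h2 : cutoff n ‖p‖ = 0 :=
    max_eq_left ((min_le_right _ _).trans (by linarith))
  rw [h2, zero_mul]

lemma continuous_cutoff_mul (n : ℕ) {F : Rd d × Rd d → ℝ} (hF : Continuous F) :
    Continuous (fun p => cutoff n ‖p‖ * F p) :=
  ((continuous_cutoff n).comp continuous_norm).mul hF

lemma mem_of_hasCompactSupport {F : Rd d × Rd d → ℝ} (hF : Continuous F)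
    (hs : HasCompactSupport F) : F ∈ QuadProd d := by
  obtain ⟨C, hC⟩ := hF.bounded_above_of_compact_support hs
  refine ⟨hF, C, fun p => (hC p).trans ?_⟩
  have h1 : 0 ≤ C := (norm_nonneg _).trans (hC p)
  have h2 : 1 ≤ quadWeightProd p := by
    unfold quadWeightProd; nlinarith [sq_nonneg ‖p.1‖, sq_nonneg ‖p.2‖]
  nlinarith

/-! ### Representation by a measure -/

/-- A positive functional on functions of quadratic growth whose marginals are measures with finite
second moments is integration against a measure. -/
lemma exists_measure_of_positive {μ ν : Measure (Rd d)}
    [IsProbabilityMeasure μ] [IsProbabilityMeasure ν]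
    (hμ2 : FiniteSecondMoment μ) (hν2 : FiniteSecondMoment ν)
    (L : QuadProd d →ₗ[ℝ] ℝ) (hL : ∀ F : QuadProd d, (∀ p, 0 ≤ F.1 p) → 0 ≤ L F)
    (hfst : ∀ f (hf : f ∈ Quad d), L ⟨_, comp_fst_mem hf⟩ = ∫ x, f x ∂μ)
    (hsnd : ∀ g (hg : g ∈ Quad d), L ⟨_, comp_snd_mem hg⟩ = ∫ y, g y ∂ν) :
    ∃ π : Measure (Rd d × Rd d), ∀ F : QuadProd d,
      Integrable F.1 π ∧ ∫ p, F.1 p ∂π = L F := by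
  have hmono : ∀ F G : QuadProd d, (∀ p, F.1 p ≤ G.1 p) → L F ≤ L G := fun F G hFG => by
    have := hL (G - F) fun p => sub_nonneg.2 (hFG p)
    rw [map_sub] at this
    linarith
  let Λ₀ : C_c(Rd d × Rd d, ℝ) →ₗ[ℝ] ℝ :=
    { toFun := fun f => L ⟨f, mem_of_hasCompactSupport f.continuous f.hasCompactSupport⟩
      map_add' := fun f g => by rw [← map_add]; rfl
      map_smul' := fun c f => by rw [← map_smul]; rfl }
  let Λ : C_c(Rd d × Rd d, ℝ) →ₚ[ℝ] ℝ := PositiveLinearMap.mk₀ Λ₀ fun f hf => hL _ fun p => hf p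
  let π := RealRMK.rieszMeasure Λ
  -- The truncation of `F` at radius `n`.
  let tr : ℕ → QuadProd d → QuadProd d := fun n F =>
    ⟨fun p => cutoff n ‖p‖ * F.1 p, mem_of_hasCompactSupport (continuous_cutoff_mul n F.2.1)
      (hasCompactSupport_cutoff_mul n F.1)⟩
  have htr_int : ∀ n F, ∫ p, (tr n F).1 p ∂π = L (tr n F) := fun n F =>
    RealRMK.integral_rieszMeasure Λ
      ⟨⟨fun p => cutoff n ‖p‖ * F.1 p, continuous_cutoff_mul n F.2.1⟩,
        hasCompactSupport_cutoff_mul n F.1⟩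
  have htr_lim : ∀ F, Tendsto (fun n => L (tr n F)) atTop (𝓝 (L F)) := by
    intro F
    obtain ⟨C, hC⟩ := F.2.2
    have hC0 : 0 ≤ C := by
      have := (abs_nonneg _).trans (hC 0)
      exact nonneg_of_mul_nonneg_left this (quadWeightProd_pos 0)
    let B : ℕ → QuadProd d := fun n =>
      (C * 2) • (⟨_, comp_fst_mem (tail_mem n)⟩ + ⟨_, comp_snd_mem (tail_mem n)⟩)
    have hB : ∀ n, L (B n) = C * 2 * (∫ x, tail n x ∂μ + ∫ y, tail n y ∂ν) := fun n => by
      rw [map_smul, map_add, hfst _ (tail_mem n), hsnd _ (tail_mem n), smul_eq_mul]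
    have hBlim : Tendsto (fun n => L (B n)) atTop (𝓝 0) := by
      simp only [hB]
      simpa using ((tendsto_integral_tail hμ2).add (tendsto_integral_tail hν2)).const_mul (C * 2)
    have hbound : ∀ n p, |F.1 p - cutoff n ‖p‖ * F.1 p| ≤ (B n).1 p := by
      intro n p
      have h0 := sub_nonneg.2 (cutoff_le_one n ‖p‖)
      have h1 : F.1 p - cutoff n ‖p‖ * F.1 p = (1 - cutoff n ‖p‖) * F.1 p := by ring
      rw [h1, abs_mul, abs_of_nonneg h0]
      have h2 := mul_le_mul_of_nonneg_left (hC p) h0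
      have h3 := mul_le_mul_of_nonneg_left (tail_prod_le n p) hC0
      change _ ≤ C * 2 * (tail n p.1 + tail n p.2)
      linarith
    rw [tendsto_iff_dist_tendsto_zero]
    refine squeeze_zero (fun n => dist_nonneg) (fun n => ?_) hBlim
    rw [Real.dist_eq, ← map_sub, abs_le]
    constructor
    · rw [← map_neg]
      refine hmono _ _ fun p => ?_
      have := (abs_le.1 (hbound n p)).2
      change -(B n).1 p ≤ cutoff n ‖p‖ * F.1 p - F.1 p
      linarith
    · refine hmono _ _ fun p => ?_
      have := (abs_le.1 (hbound n p)).1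
      change cutoff n ‖p‖ * F.1 p - F.1 p ≤ (B n).1 p
      linarith
  have hpt : ∀ F : Rd d × Rd d → ℝ, ∀ p, Tendsto (fun n => cutoff n ‖p‖ * F p) atTop (𝓝 (F p)) :=
    fun F p => by simpa using (tendsto_cutoff ‖p‖).mul_const (F p)
  have hfin : IsFiniteMeasureOnCompacts π := by
    change IsFiniteMeasureOnCompacts (RealRMK.rieszMeasure Λ)
    infer_instance
  -- Fatou's lemma bounds the integral of the weight by the value of `L` on it.
  have hW : Integrable (quadWeightProd (d := d)) π := by
    let W : QuadProd d := ⟨quadWeightProd, continuous_quadWeightProd, 1, fun p => by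
      rw [abs_of_pos (quadWeightProd_pos p), one_mul]⟩
    refine ⟨continuous_quadWeightProd.aestronglyMeasurable, ?_⟩
    rw [hasFiniteIntegral_iff_ofReal (ae_of_all _ fun p => (quadWeightProd_pos p).le)]
    have hlim : ∀ p : Rd d × Rd d, ENNReal.ofReal (quadWeightProd p)
        = liminf (fun n => ENNReal.ofReal (cutoff n ‖p‖ * quadWeightProd p)) atTop := fun p =>
      (ENNReal.tendsto_ofReal (hpt quadWeightProd p)).liminf_eq.symm
    simp only [hlim]
    refine (lintegral_liminf_le fun n =>
      (continuous_cutoff_mul n continuous_quadWeightProd).measurable.ennreal_ofReal).trans_lt ?_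
    have heq : ∀ n, ∫⁻ p, ENNReal.ofReal (cutoff n ‖p‖ * quadWeightProd p) ∂π
        = ENNReal.ofReal (L (tr n W)) := fun n => by
      rw [← htr_int n W, ofReal_integral_eq_lintegral_ofReal]
      · exact (continuous_cutoff_mul n continuous_quadWeightProd).integrable_of_hasCompactSupport
          (hasCompactSupport_cutoff_mul n _)
      · exact ae_of_all _ fun p => mul_nonneg (cutoff_nonneg _ _) (quadWeightProd_pos p).le
    simp only [heq]
    rw [(ENNReal.tendsto_ofReal (htr_lim W)).liminf_eq]
    exact ENNReal.ofReal_lt_top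
  refine ⟨π, fun F => ?_⟩
  obtain ⟨C, hC⟩ := F.2.2
  have hCW : Integrable (fun p => C * quadWeightProd p) π := hW.const_mul C
  refine ⟨hCW.mono' F.2.1.aestronglyMeasurable (ae_of_all _ hC), ?_⟩
  refine tendsto_nhds_unique ?_ (htr_lim F)
  simp only [← htr_int]
  refine tendsto_integral_of_dominated_convergence _
    (fun n => (continuous_cutoff_mul n F.2.1).aestronglyMeasurable) hCW
    (fun n => ae_of_all _ fun p => ?_) (ae_of_all _ fun p => hpt F.1 p)
  change |cutoff n ‖p‖ * F.1 p| ≤ _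
  rw [abs_mul, abs_of_nonneg (cutoff_nonneg _ _)]
  exact (mul_le_of_le_one_left (abs_nonneg _) (cutoff_le_one _ _)).trans (hC p)

lemma boundedContinuous_mem (f : BoundedContinuousFunction (Rd d) ℝ) : ⇑f ∈ Quad d := by
  refine ⟨f.continuous, ‖f‖, fun x => (f.norm_coe_le_norm x).trans ?_⟩
  have h2 : 1 ≤ quadWeight x := by unfold quadWeight; nlinarith [sq_nonneg ‖x‖]
  nlinarith [norm_nonneg f]

/-- If `ν ∈ P_{2,0}(ℝ^d)`, `μ ∈ P₂(ℝ^d)` and `μ ≤_c ν` (convex order), then `μ ≼_K ν`: there is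
a coupling `π` of `μ` and `ν` with `∫ ⟨x, y - x⟩ dπ = 0`. -/
theorem stmt_8 {d : ℕ} (μ ν : Measure (Rd d))
    [IsProbabilityMeasure μ] [IsProbabilityMeasure ν]
    (hμ2 : FiniteSecondMoment μ) (hν2 : FiniteSecondMoment ν)
    (hν0 : (∫ y, y ∂ν) = 0) (h : ConvexOrder μ ν) :
    ∃ π : Measure (Rd d × Rd d), IsCoupling π μ ν ∧
      (∫ p : Rd d × Rd d, ⟪p.1, p.2 - p.1⟫ ∂π) = 0 := by
  obtain ⟨L, hL, hfst, hsnd, hq⟩ := exists_positive_extension hμ2 hν2 h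
  obtain ⟨π, hπ⟩ := exists_measure_of_positive hμ2 hν2 L hL hfst hsnd
  have hfin : IsFiniteMeasure π := by
    have h1 := (hπ ⟨_, comp_fst_mem (boundedContinuous_mem
      (BoundedContinuousFunction.const (Rd d) (1 : ℝ)))⟩).1
    exact (integrable_const_iff_isFiniteMeasure (one_ne_zero (α := ℝ))).1 h1
  refine ⟨π, ⟨?_, ?_⟩, (hπ ⟨_, inner_sub_mem⟩).2.trans hq⟩
  · refine ext_of_forall_integral_eq_of_IsFiniteMeasure fun f => ?_
    rw [integral_map measurable_fst.aemeasurable f.continuous.aestronglyMeasurable]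
    exact (hπ ⟨_, comp_fst_mem (boundedContinuous_mem f)⟩).2.trans (hfst _ (boundedContinuous_mem f))
  · refine ext_of_forall_integral_eq_of_IsFiniteMeasure fun f => ?_
    rw [integral_map measurable_snd.aemeasurable f.continuous.aestronglyMeasurable]
    exact (hπ ⟨_, comp_snd_mem (boundedContinuous_mem f)⟩).2.trans (hsnd _ (boundedContinuous_mem f))
end
end

section
/- Let ν ∈ P_{2,0}(ℝ^d) and μ ∈ P_2(ℝ^d). The following are equivalent: (a) there exists a coupling π ∈ Π(μ,ν) with ∫⟨x, y − x⟩ dπ(x,y) = 0 (i.e., μ ≼_K ν); (b) D(μ,ν) := sup_{π∈Π(μ,ν)} ∫⟨x, y − x⟩ dπ(x,y) ≥ 0; (c) W_2²(μ,ν) ≤ ∫|y|² dν(y) − ∫|x|² dμ(x). -/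
/-!
For a coupling `π` of `μ` and `ν`, write `I(π) = ∫ ⟨x, y - x⟩ dπ` and `C(π) = ∫ |x - y|² dπ`.
The pointwise identity `|x - y|² = |y|² - |x|² - 2⟨x, y - x⟩` gives
`C(π) = ∫|y|² dν - ∫|x|² dμ - 2 I(π)`, so maximizing `I` is the same as minimizing `C`, and
conditions (b) and (c) both follow at once from the existence of a coupling with `I(π) = 0`.

Conversely, an optimal coupling `π₀` exists (`exists_optimal_coupling`): couplings form a weakly
compact set by Prokhorov's theorem, and `C` is weakly lower semicontinuous. Either of (b) and (c)
then says `I(π₀) ≥ 0`. Since `ν` is centered, the product coupling has `I(μ ⊗ ν) = -∫|x|² dμ ≤ 0`,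
and as `I` is affine, some mixture of `π₀` and `μ ⊗ ν` satisfies `I = 0`. Attainment of the supremum
is what makes the borderline case `D(μ,ν) = 0` work.
-/

open MeasureTheory Filter
open scoped RealInnerProductSpace Topology

noncomputable section

/-- `D(μ,ν) = sup_{π ∈ Π(μ,ν)} ∫ ⟨x, y - x⟩ dπ(x,y)` (for centered `ν`). -/
def Dval {d : ℕ} (μ ν : Measure (Rd d)) : ℝ :=
  sSup ((fun π : Measure (Rd d × Rd d) => ∫ p : Rd d × Rd d, ⟪p.1, p.2 - p.1⟫ ∂π) ''
    {π | IsCoupling π μ ν})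

section Coupling

variable {d : ℕ} {μ ν : Measure (Rd d)} {π : Measure (Rd d × Rd d)}

lemma IsCoupling.isProbabilityMeasure [IsProbabilityMeasure μ] (h : IsCoupling π μ ν) :
    IsProbabilityMeasure π := by
  have h1 : IsProbabilityMeasure (π.map Prod.fst) := by rw [h.1]; infer_instance
  exact Measure.isProbabilityMeasure_of_map Prod.fst

lemma isCoupling_prod [IsProbabilityMeasure μ] [IsProbabilityMeasure ν] :
    IsCoupling (μ.prod ν) μ ν := by
  constructor
  · simp [Measure.map_fst_prod]
  · simp [Measure.map_snd_prod]

lemma IsCoupling.memLp_fst (h : IsCoupling π μ ν) (hμ2 : FiniteSecondMoment μ) :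
    MemLp (fun p : Rd d × Rd d => p.1) 2 π := by
  have h1 : MemLp (id : Rd d → Rd d) 2 μ :=
    (memLp_two_iff_integrable_sq_norm aestronglyMeasurable_id).2 hμ2
  rw [← h.1] at h1
  exact h1.comp_of_map measurable_fst.aemeasurable

lemma IsCoupling.memLp_snd (h : IsCoupling π μ ν) (hν2 : FiniteSecondMoment ν) :
    MemLp (fun p : Rd d × Rd d => p.2) 2 π := by
  have h1 : MemLp (id : Rd d → Rd d) 2 ν :=
    (memLp_two_iff_integrable_sq_norm aestronglyMeasurable_id).2 hν2
  rw [← h.2] at h1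
  exact h1.comp_of_map measurable_snd.aemeasurable

lemma IsCoupling.integrable_cost_s9 (h : IsCoupling π μ ν) (hμ2 : FiniteSecondMoment μ)
    (hν2 : FiniteSecondMoment ν) :
    Integrable (fun p : Rd d × Rd d => ‖p.1 - p.2‖ ^ 2) π :=
  ((h.memLp_fst hμ2).sub (h.memLp_snd hν2)).integrable_norm_pow (by norm_num)

lemma IsCoupling.integrable_inner (h : IsCoupling π μ ν) (hμ2 : FiniteSecondMoment μ)
    (hν2 : FiniteSecondMoment ν) :
    Integrable (fun p : Rd d × Rd d => ⟪p.1, p.2 - p.1⟫) π := by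
  have i1 : Integrable (fun p : Rd d × Rd d => ‖p.1‖ ^ 2) π :=
    (h.memLp_fst hμ2).integrable_norm_pow (by norm_num)
  have i2 : Integrable (fun p : Rd d × Rd d => ‖p.2‖ ^ 2) π :=
    (h.memLp_snd hν2).integrable_norm_pow (by norm_num)
  refine (((i2.sub i1).sub (h.integrable_cost_s9 hμ2 hν2)).div_const 2).congr (ae_of_all _ fun p => ?_)
  simp only [Pi.sub_apply]
  rw [norm_sub_sq_real, inner_sub_right, real_inner_self_eq_norm_sq]
  ring

/-- The quadratic cost of a coupling is an affine decreasing function of `∫ ⟨x, y - x⟩ dπ`. -/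
lemma IsCoupling.cost_eq (h : IsCoupling π μ ν) (hμ2 : FiniteSecondMoment μ)
    (hν2 : FiniteSecondMoment ν) :
    ∫ p, ‖p.1 - p.2‖ ^ 2 ∂π = (∫ y, ‖y‖ ^ 2 ∂ν) - (∫ x, ‖x‖ ^ 2 ∂μ)
      - 2 * ∫ p : Rd d × Rd d, ⟪p.1, p.2 - p.1⟫ ∂π := by
  have e1 : ∫ x, ‖x‖ ^ 2 ∂μ = ∫ p : Rd d × Rd d, ‖p.1‖ ^ 2 ∂π := by
    rw [← h.1, integral_map measurable_fst.aemeasurable (by fun_prop)]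
  have e2 : ∫ y, ‖y‖ ^ 2 ∂ν = ∫ p : Rd d × Rd d, ‖p.2‖ ^ 2 ∂π := by
    rw [← h.2, integral_map measurable_snd.aemeasurable (by fun_prop)]
  have i1 : Integrable (fun p : Rd d × Rd d => ‖p.1‖ ^ 2) π :=
    (h.memLp_fst hμ2).integrable_norm_pow (by norm_num)
  have i2 : Integrable (fun p : Rd d × Rd d => ‖p.2‖ ^ 2) π :=
    (h.memLp_snd hν2).integrable_norm_pow (by norm_num)
  rw [e1, e2, ← integral_const_mul, ← integral_sub i2 i1,
    ← integral_sub (f := fun p : Rd d × Rd d => ‖p.2‖ ^ 2 - ‖p.1‖ ^ 2) (i2.sub i1)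
      ((h.integrable_inner hμ2 hν2).const_mul 2)]
  congr 1
  ext p
  rw [norm_sub_sq_real, inner_sub_right, real_inner_self_eq_norm_sq]
  ring

end Coupling

/-- The `ℝ≥0∞`-valued quadratic cost is weakly lower semicontinuous, being the supremum of the
integrals of its bounded continuous truncations. -/
lemma lowerSemicontinuous_cost (d : ℕ) :
    LowerSemicontinuous (fun π : ProbabilityMeasure (Rd d × Rd d) =>
      ∫⁻ p, ENNReal.ofReal (‖p.1 - p.2‖ ^ 2) ∂(π : Measure (Rd d × Rd d))) := by
  let f : ℕ → BoundedContinuousFunction (Rd d × Rd d) NNReal := fun n =>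
    BoundedContinuousFunction.mkOfBound
      ⟨fun p => min (Real.toNNReal (‖p.1 - p.2‖ ^ 2)) n, by fun_prop⟩ n (fun x y => by
        have hb : ∀ a b c : NNReal, dist (min a c) (min b c) ≤ c := fun a b c => by
          rw [NNReal.dist_eq, abs_le]
          have h1 : ((min a c : NNReal) : ℝ) ≤ c := by exact_mod_cast min_le_right a c
          have h2 : ((min b c : NNReal) : ℝ) ≤ c := by exact_mod_cast min_le_right b c
          have h3 := (min a c).coe_nonneg
          have h4 := (min b c).coe_nonneg
          constructor <;> linarith
        exact hb _ _ n)
  have key : (fun π : ProbabilityMeasure (Rd d × Rd d) =>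
      ∫⁻ p, ENNReal.ofReal (‖p.1 - p.2‖ ^ 2) ∂(π : Measure (Rd d × Rd d))) =
      fun π : ProbabilityMeasure (Rd d × Rd d) =>
        ⨆ n, ∫⁻ p, (f n p : ENNReal) ∂(π : Measure (Rd d × Rd d)) := by
    ext π
    rw [← lintegral_iSup]
    · congr 1
      ext p
      have hf : ∀ n, (f n p : ENNReal) = min (ENNReal.ofReal (‖p.1 - p.2‖ ^ 2)) n := fun n => by
        change ((min (Real.toNNReal (‖p.1 - p.2‖ ^ 2)) (n : NNReal) : NNReal) : ENNReal) = _
        rw [ENNReal.coe_min]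
        rfl
      simp only [hf]
      apply le_antisymm
      · obtain ⟨n, hn⟩ := ENNReal.exists_nat_gt
          (ENNReal.ofReal_ne_top : ENNReal.ofReal (‖p.1 - p.2‖ ^ 2) ≠ ⊤)
        exact le_iSup_of_le n (le_min le_rfl hn.le)
      · exact iSup_le fun n => min_le_left _ _
    · intro n
      exact (f n).continuous.measurable.coe_nnreal_ennreal
    · intro m n hmn p
      exact ENNReal.coe_le_coe.2 (min_le_min_left _ (by exact_mod_cast hmn))
  rw [key]
  exact lowerSemicontinuous_iSup fun n =>
    (ProbabilityMeasure.continuous_lintegral_boundedContinuousFunction (f n)).lowerSemicontinuous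

/-- Couplings are tight because their marginals are fixed, and they are closed because taking
marginals is weakly continuous; Prokhorov's theorem concludes. -/
lemma isCompact_couplings {d : ℕ} (μ ν : Measure (Rd d))
    [IsProbabilityMeasure μ] [IsProbabilityMeasure ν] :
    IsCompact {π : ProbabilityMeasure (Rd d × Rd d) | IsCoupling (π : Measure _) μ ν} := by
  set S := {π : ProbabilityMeasure (Rd d × Rd d) | IsCoupling (π : Measure _) μ ν}
  have hclosed : IsClosed S := by
    have : S = {π | π.map (f := Prod.fst) measurable_fst.aemeasurable = ⟨μ, inferInstance⟩} ∩
        {π | π.map (f := Prod.snd) measurable_snd.aemeasurable = ⟨ν, inferInstance⟩} := by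
      ext π
      constructor
      · exact fun h => ⟨Subtype.ext h.1, Subtype.ext h.2⟩
      · exact fun h => ⟨congrArg Subtype.val h.1, congrArg Subtype.val h.2⟩
    rw [this]
    exact (isClosed_eq (ProbabilityMeasure.continuous_map continuous_fst) continuous_const).inter
      (isClosed_eq (ProbabilityMeasure.continuous_map continuous_snd) continuous_const)
  rw [← hclosed.closure_eq]
  apply isCompact_closure_of_isTightMeasureSet
  apply IsTightMeasureSet.prodMk
  · refine (isTightMeasureSet_singleton (μ := μ)).subset ?_
    rintro _ ⟨_, ⟨π, hπ, rfl⟩, rfl⟩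
    exact hπ.1
  · refine (isTightMeasureSet_singleton (μ := ν)).subset ?_
    rintro _ ⟨_, ⟨π, hπ, rfl⟩, rfl⟩
    exact hπ.2

lemma exists_optimal_coupling {d : ℕ} (μ ν : Measure (Rd d))
    [IsProbabilityMeasure μ] [IsProbabilityMeasure ν]
    (hμ2 : FiniteSecondMoment μ) (hν2 : FiniteSecondMoment ν) :
    ∃ π₀, IsCoupling π₀ μ ν ∧ ∀ π, IsCoupling π μ ν →
      ∫ p, ‖p.1 - p.2‖ ^ 2 ∂π₀ ≤ ∫ p, ‖p.1 - p.2‖ ^ 2 ∂π := by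
  obtain ⟨π₀, h₀, hmin⟩ := LowerSemicontinuousOn.exists_isMinOn
    ⟨⟨μ.prod ν, inferInstance⟩, isCoupling_prod⟩ (isCompact_couplings μ ν)
    ((lowerSemicontinuous_cost d).lowerSemicontinuousOn _)
  refine ⟨π₀, h₀, fun π hπ => ?_⟩
  have hp : IsProbabilityMeasure π := hπ.isProbabilityMeasure
  have hle : ∫⁻ p, ENNReal.ofReal (‖p.1 - p.2‖ ^ 2) ∂(π₀ : Measure (Rd d × Rd d)) ≤
      ∫⁻ p, ENNReal.ofReal (‖p.1 - p.2‖ ^ 2) ∂π := hmin (a := ⟨π, hp⟩) hπ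
  rw [← ofReal_integral_eq_lintegral_ofReal (IsCoupling.integrable_cost_s9 h₀ hμ2 hν2)
      (ae_of_all _ fun _ => by positivity),
    ← ofReal_integral_eq_lintegral_ofReal (hπ.integrable_cost_s9 hμ2 hν2)
      (ae_of_all _ fun _ => by positivity)] at hle
  exact (ENNReal.ofReal_le_ofReal_iff (integral_nonneg fun _ => by positivity)).1 hle

/-- Since `ν` is centered, the integral against the product coupling equals `-∫ |x|² dμ`. -/
lemma integral_inner_prod_nonpos {d : ℕ} (μ ν : Measure (Rd d))
    [IsProbabilityMeasure μ] [IsProbabilityMeasure ν]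
    (hμ2 : FiniteSecondMoment μ) (hν2 : FiniteSecondMoment ν) (hν0 : (∫ y, y ∂ν) = 0) :
    ∫ p : Rd d × Rd d, ⟪p.1, p.2 - p.1⟫ ∂(μ.prod ν) ≤ 0 := by
  have hid : Integrable (fun y : Rd d => y) ν :=
    ((memLp_two_iff_integrable_sq_norm aestronglyMeasurable_id).2 hν2).integrable (by norm_num)
  rw [integral_prod _ (isCoupling_prod.integrable_inner hμ2 hν2)]
  refine integral_nonpos fun x => ?_
  have : ∫ y, ⟪x, y - x⟫ ∂ν = -‖x‖ ^ 2 := by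
    rw [integral_inner (𝕜 := ℝ) (f := fun y => y - x) (hid.sub (integrable_const x)),
      integral_sub hid (integrable_const x), hν0]
    simp
  simp only [this, Pi.zero_apply]
  nlinarith [sq_nonneg ‖x‖]

/-- The convex combination of two couplings that cancels a nonnegative and a nonpositive value
of the affine functional `π ↦ ∫ ⟨x, y - x⟩ dπ`. -/
lemma exists_coupling_eq_zero {d : ℕ} {μ ν : Measure (Rd d)} {π₀ π₁ : Measure (Rd d × Rd d)}
    (hμ2 : FiniteSecondMoment μ) (hν2 : FiniteSecondMoment ν)
    (h₀ : IsCoupling π₀ μ ν) (h₁ : IsCoupling π₁ μ ν)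
    (hI₀ : 0 ≤ ∫ p : Rd d × Rd d, ⟪p.1, p.2 - p.1⟫ ∂π₀)
    (hI₁ : ∫ p : Rd d × Rd d, ⟪p.1, p.2 - p.1⟫ ∂π₁ ≤ 0) :
    ∃ π : Measure (Rd d × Rd d), IsCoupling π μ ν ∧
      (∫ p : Rd d × Rd d, ⟪p.1, p.2 - p.1⟫ ∂π) = 0 := by
  set a := ∫ p : Rd d × Rd d, ⟪p.1, p.2 - p.1⟫ ∂π₀ with ha
  set b := ∫ p : Rd d × Rd d, ⟪p.1, p.2 - p.1⟫ ∂π₁ with hb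
  rcases hI₀.eq_or_lt with h | hpos
  · exact ⟨π₀, h₀, ha.symm.trans h.symm⟩
  have hab : 0 < a - b := by linarith
  -- the weights solve `s + t = 1`, `s * a + t * b = 0`
  set s := -b / (a - b) with hs
  set t := a / (a - b) with ht
  have hs0 : 0 ≤ s := div_nonneg (by linarith) hab.le
  have ht0 : 0 ≤ t := div_nonneg hI₀ hab.le
  have hst : ENNReal.ofReal s + ENNReal.ofReal t = 1 := by
    rw [← ENNReal.ofReal_add hs0 ht0, hs, ht, ← add_div]
    rw [show -b + a = a - b by ring, div_self hab.ne', ENNReal.ofReal_one]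
  refine ⟨ENNReal.ofReal s • π₀ + ENNReal.ofReal t • π₁, ⟨?_, ?_⟩, ?_⟩
  · rw [Measure.map_add _ _ measurable_fst, Measure.map_smul, Measure.map_smul, h₀.1, h₁.1,
      ← add_smul, hst, one_smul]
  · rw [Measure.map_add _ _ measurable_snd, Measure.map_smul, Measure.map_smul, h₀.2, h₁.2,
      ← add_smul, hst, one_smul]
  · rw [integral_add_measure ((h₀.integrable_inner hμ2 hν2).smul_measure ENNReal.ofReal_ne_top)
        ((h₁.integrable_inner hμ2 hν2).smul_measure ENNReal.ofReal_ne_top),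
      integral_smul_measure, integral_smul_measure, ENNReal.toReal_ofReal hs0,
      ENNReal.toReal_ofReal ht0, ← ha, ← hb, hs, ht, smul_eq_mul, smul_eq_mul]
    field_simp
    ring

/-- For `ν ∈ P_{2,0}(ℝ^d)` and `μ ∈ P₂(ℝ^d)`, the following are equivalent: (a) `μ ≼_K ν`;
(b) `D(μ,ν) = sup_{π ∈ Π(μ,ν)} ∫ ⟨x, y-x⟩ dπ ≥ 0`; (c) `W₂²(μ,ν) ≤ ∫|y|²dν - ∫|x|²dμ`. -/
theorem stmt_9 {d : ℕ} (μ ν : Measure (Rd d))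
    [IsProbabilityMeasure μ] [IsProbabilityMeasure ν]
    (hμ2 : FiniteSecondMoment μ) (hν2 : FiniteSecondMoment ν)
    (hν0 : (∫ y, y ∂ν) = 0) :
    ((∃ π : Measure (Rd d × Rd d), IsCoupling π μ ν ∧
        (∫ p : Rd d × Rd d, ⟪p.1, p.2 - p.1⟫ ∂π) = 0) ↔ 0 ≤ Dval μ ν) ∧
    ((∃ π : Measure (Rd d × Rd d), IsCoupling π μ ν ∧
        (∫ p : Rd d × Rd d, ⟪p.1, p.2 - p.1⟫ ∂π) = 0) ↔
      W2sq μ ν ≤ (∫ y, ‖y‖ ^ 2 ∂ν) - ∫ x, ‖x‖ ^ 2 ∂μ) := by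
  obtain ⟨π₀, h₀, hmin⟩ := exists_optimal_coupling μ ν hμ2 hν2
  have hmax : ∀ π, IsCoupling π μ ν → ∫ p : Rd d × Rd d, ⟪p.1, p.2 - p.1⟫ ∂π ≤
      ∫ p : Rd d × Rd d, ⟪p.1, p.2 - p.1⟫ ∂π₀ := fun π hπ => by
    have := hmin π hπ
    rw [h₀.cost_eq hμ2 hν2, hπ.cost_eq hμ2 hν2] at this
    linarith
  have hD : Dval μ ν = ∫ p : Rd d × Rd d, ⟪p.1, p.2 - p.1⟫ ∂π₀ := by
    refine IsGreatest.csSup_eq ⟨⟨π₀, h₀, rfl⟩, ?_⟩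
    rintro _ ⟨π, hπ, rfl⟩
    exact hmax π hπ
  have hW : W2sq μ ν = ∫ p, ‖p.1 - p.2‖ ^ 2 ∂π₀ := by
    refine IsLeast.csInf_eq ⟨⟨π₀, h₀, rfl⟩, ?_⟩
    rintro _ ⟨π, hπ, rfl⟩
    exact hmin π hπ
  have hiff : (∃ π : Measure (Rd d × Rd d), IsCoupling π μ ν ∧
      (∫ p : Rd d × Rd d, ⟪p.1, p.2 - p.1⟫ ∂π) = 0) ↔
      0 ≤ ∫ p : Rd d × Rd d, ⟪p.1, p.2 - p.1⟫ ∂π₀ := by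
    constructor
    · rintro ⟨π, hπ, h⟩
      exact h ▸ hmax π hπ
    · intro h
      exact exists_coupling_eq_zero hμ2 hν2 h₀ isCoupling_prod h
        (integral_inner_prod_nonpos μ ν hμ2 hν2 hν0)
  rw [hiff, hD, hW, h₀.cost_eq hμ2 hν2]
  refine ⟨Iff.rfl, ?_⟩
  constructor <;> intro h <;> linarith
end
end

section
/- Let Ω ⊂ ℝ^d be compact and convex with 0 ∈ Ω, and let ν ∈ P_{2,0}(Ω). If D ⊂ P_2(ℝ^d) is closed in the W_2 metric and D ∩ M_{ν,Ω}^K is non-empty, where M_{ν,Ω}^K = {μ ∈ P_2(Ω) : μ ≼_K ν}, then the problem max{ Var(μ) : μ ∈ D ∩ M_{ν,Ω}^K } admits a solution. -/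
/-!
The maximum is attained because the problem lives on a compact space of couplings. A competitor
`μ` and a coupling witnessing `μ ≼_K ν` are both encoded by a probability measure on the compact
space `Ω × Ω`, and such measures form a compact metrizable space under weak convergence. The
conditions that the second marginal be `ν` and that `∫ ⟨x, y - x⟩ = 0` are weakly closed, since they test against
continuous functions on a compact space, and the variance of the first marginal is weakly
continuous for the same reason (`continuous_Var_map_val`).

The remaining point is that membership of the first marginal in `D` is weakly closed although `D` is only assumed
closed in `W2`; that is, weak convergence on a compact space implies `W2` convergence
(`tendsto_W2_map_val`). Given `μₙ → μ` weakly, cut the space into finitely many small cells with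
`μ`-null boundary (`exists_partition_null_frontier`). For large `n`, every cell has `μₙ`-mass at
least `(1 - δ)` times its `μ`-mass, which allows all but mass `δ` to be transported within cells
(`exists_coupling_of_partition`), at a small total quadratic cost (`exists_coupling_cost_le`).
-/

open MeasureTheory Filter
open scoped RealInnerProductSpace Topology

noncomputable section

/-- Membership in `M_{ν,Ω}^K = {μ ∈ P₂(Ω) : μ ≼_K ν}`: a probability measure with finite
second moment, concentrated on `Ω`, Kantorovich-dominated by `ν`. -/
def MemMK {d : ℕ} (Ω : Set (Rd d)) (ν μ : Measure (Rd d)) : Prop :=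
  IsProbabilityMeasure μ ∧ FiniteSecondMoment μ ∧ μ Ωᶜ = 0 ∧ KDom μ ν

/-! ### Weak convergence and couplings of small cost -/

/-- If every cell of a finite measurable partition carries at least the fraction `t` of its
`μ`-mass under `μ'`, then there is a coupling of `μ'` and `μ` that puts mass at most `1 - t` on
pairs of points in different cells: inside each cell the fraction `t` of `μ` is coupled with `μ'`
independently, and the remaining part of `μ'` is coupled independently with `μ`. -/
lemma exists_coupling_of_partition {X ι : Type*} [MeasurableSpace X] [Fintype ι]
    (μ μ' : Measure X) [IsProbabilityMeasure μ] [IsProbabilityMeasure μ']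
    (A : ι → Set X) (hA : ∀ i, MeasurableSet (A i)) (hdisj : Pairwise (Function.onFun Disjoint A))
    (hcov : ⋃ i, A i = Set.univ) (t s : ENNReal) (hts : t + s = 1) (ht : t ≠ 0)
    (hle : ∀ i, t * μ (A i) ≤ μ' (A i)) :
    ∃ γ : Measure (X × X), γ.map Prod.fst = μ' ∧ γ.map Prod.snd = μ ∧
      γ (⋃ i, A i ×ˢ A i)ᶜ ≤ s := by
  have ht1 : t ≤ 1 := hts ▸ le_self_add
  have htop : t ≠ ⊤ := (ht1.trans_lt ENNReal.one_lt_top).ne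
  have hsum : ∀ (ρ : Measure X), ∑ i, ρ.restrict (A i) = ρ := by
    intro ρ
    rw [← Measure.sum_fintype, ← Measure.restrict_iUnion hdisj hA, hcov, Measure.restrict_univ]
  let c : ι → ENNReal := fun i => t / μ' (A i)
  let r : ι → ENNReal := fun i => c i * μ (A i)
  have hr : ∀ i, r i ≤ 1 := by
    intro i
    have : r i = (t * μ (A i)) / μ' (A i) := by
      simp only [r, c, div_eq_mul_inv]; ring
    rw [this]
    exact ENNReal.div_le_of_le_mul (by simpa using hle i)
  have hc : ∀ i, (c i * μ' (A i)) • μ.restrict (A i) = t • μ.restrict (A i) := by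
    intro i
    by_cases h0 : μ' (A i) = 0
    · have : μ (A i) = 0 := by
        have := hle i
        rw [h0, nonpos_iff_eq_zero, mul_eq_zero] at this
        exact this.resolve_left ht
      rw [Measure.restrict_eq_zero.2 this]; simp
    · simp only [c]
      rw [ENNReal.div_mul_cancel h0 (measure_ne_top _ _)]
  let σ : Measure X := ∑ i, (1 - r i) • μ'.restrict (A i)
  have hfst : ∑ i, (r i) • μ'.restrict (A i) + σ = μ' := by
    simp only [σ]
    rw [← Finset.sum_add_distrib]
    conv_rhs => rw [← hsum μ']
    refine Finset.sum_congr rfl fun i _ => ?_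
    rw [← add_smul, add_tsub_cancel_of_le (hr i), one_smul]
  have hσle : σ ≤ μ' := by
    conv_rhs => rw [← hfst]
    exact Measure.le_add_left le_rfl
  have : IsFiniteMeasure σ := isFiniteMeasure_of_le μ' hσle
  have hsnd0 : ∑ i, (c i * μ' (A i)) • μ.restrict (A i) = t • μ := by
    conv_rhs => rw [← hsum μ]
    rw [Finset.smul_sum]
    exact Finset.sum_congr rfl fun i _ => hc i
  have hσ : σ Set.univ = s := by
    have h1 := congrArg (fun ρ : Measure X => ρ Set.univ) hfst
    have h2 := congrArg (fun ρ : Measure X => ρ Set.univ) hsnd0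
    simp only [Measure.add_apply, Measure.finsetSum_apply, Measure.smul_apply, smul_eq_mul,
      Measure.restrict_apply_univ, measure_univ, mul_one] at h1 h2
    have h3 : ∑ i, r i * μ' (A i) = t := by
      rw [← h2]
      refine Finset.sum_congr rfl fun i _ => ?_
      simp only [r]; ring
    rw [h3, ← hts] at h1
    exact (ENNReal.add_right_inj htop).1 h1
  refine ⟨∑ i, c i • (μ'.restrict (A i)).prod (μ.restrict (A i)) + σ.prod μ, ?_, ?_, ?_⟩
  · rw [Measure.map_add _ _ measurable_fst, Measure.map_fst_prod, measure_univ, one_smul,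
      ← Measure.mapₗ_apply_of_measurable measurable_fst, map_sum]
    conv_rhs => rw [← hfst]
    congr 1
    refine Finset.sum_congr rfl fun i _ => ?_
    rw [Measure.mapₗ_apply_of_measurable measurable_fst, Measure.map_smul, Measure.map_fst_prod,
      smul_smul, Measure.restrict_apply_univ]
  · rw [Measure.map_add _ _ measurable_snd, Measure.map_snd_prod, hσ,
      ← Measure.mapₗ_apply_of_measurable measurable_snd, map_sum]
    have : μ = t • μ + s • μ := by rw [← add_smul, hts, one_smul]
    conv_rhs => rw [this, ← hsnd0]
    congr 1
    refine Finset.sum_congr rfl fun i _ => ?_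
    rw [Measure.mapₗ_apply_of_measurable measurable_snd, Measure.map_smul, Measure.map_snd_prod,
      smul_smul, Measure.restrict_apply_univ]
  · rw [Measure.add_apply, Measure.finsetSum_apply, Finset.sum_eq_zero, zero_add]
    · refine (measure_mono (Set.subset_univ _)).trans ?_
      rw [← Set.univ_prod_univ, Measure.prod_prod, hσ, measure_univ, mul_one]
    · intro i _
      rw [Measure.smul_apply, Measure.prod_restrict, Measure.restrict_apply]
      · rw [Set.disjoint_iff_inter_eq_empty.1]
        · simp
        · exact Set.disjoint_compl_left_iff_subset.2 (Set.subset_iUnion (fun i => A i ×ˢ A i) i)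
      · exact (MeasurableSet.iUnion fun i => (hA i).prod (hA i)).compl

/-- A compact metric space has finite measurable partitions of arbitrarily small mesh whose cells
have `μ`-null boundary: disjointify a finite cover by balls of generic radii. -/
lemma exists_partition_null_frontier {X : Type*} [MetricSpace X] [CompactSpace X]
    [MeasurableSpace X] [BorelSpace X] (μ : Measure X) [IsProbabilityMeasure μ]
    {ε : ℝ} (hε : 0 < ε) :
    ∃ (N : ℕ) (A : Fin N → Set X), (∀ i, MeasurableSet (A i)) ∧
      Pairwise (Function.onFun Disjoint A) ∧ ⋃ i, A i = Set.univ ∧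
      (∀ i, μ (frontier (A i)) = 0) ∧ ∀ i, ∀ x ∈ A i, ∀ y ∈ A i, dist x y ≤ ε := by
  have hr : ∀ x : X, ∃ r ∈ Set.Ioo 0 (ε / 2), μ (frontier (Metric.thickening r {x})) = 0 :=
    fun x => exists_null_frontier_thickening μ {x} (by positivity)
  choose r hr hr0 using hr
  simp only [Metric.thickening_singleton] at hr0
  obtain ⟨T, hT⟩ := isCompact_univ.elim_finite_subcover (fun x : X => Metric.ball x (r x))
    (fun x => Metric.isOpen_ball)
    (fun x _ => Set.mem_iUnion.2 ⟨x, Metric.mem_ball_self (hr x).1⟩)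
  let e := T.equivFin.symm
  let B : Fin T.card → Set X := fun i => Metric.ball (e i : X) (r (e i))
  refine ⟨T.card, disjointed B, ?_, disjoint_disjointed B, ?_, ?_, ?_⟩
  · exact fun i => disjointedRec (p := MeasurableSet)
      (fun t j ht => ht.diff measurableSet_ball) measurableSet_ball
  · rw [← Set.iSup_eq_iUnion, iSup_disjointed, Set.iSup_eq_iUnion, Set.eq_univ_iff_forall]
    intro x
    obtain ⟨y, hy, hxy⟩ := Set.mem_iUnion₂.1 (hT (Set.mem_univ x))
    exact Set.mem_iUnion.2 ⟨e.symm ⟨y, hy⟩, by simpa [B] using hxy⟩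
  · exact fun i => disjointedRec (p := fun s => μ (frontier s) = 0)
      (fun t j ht => by
        rw [Set.sdiff_eq]
        exact null_frontier_inter ht (by rw [frontier_compl]; exact hr0 _)) (hr0 _)
  · intro i x hx y hy
    have h1 := disjointed_le B i hx
    have h2 := disjointed_le B i hy
    have h3 := (hr (e i)).2
    simp only [B, Metric.mem_ball] at h1 h2
    linarith [dist_triangle_right x y (e i : X)]

/-- On a compact metric space, weak convergence yields couplings with vanishing quadratic cost. -/
lemma exists_coupling_cost_le_s12 {X : Type*} [MetricSpace X] [CompactSpace X]
    [MeasurableSpace X] [BorelSpace X] {μs : ℕ → ProbabilityMeasure X} {μ : ProbabilityMeasure X}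
    (h : Tendsto μs atTop (𝓝 μ)) {ε : ℝ} (hε : 0 < ε) :
    ∀ᶠ n in atTop, ∃ γ : Measure (X × X), γ.map Prod.fst = μs n ∧ γ.map Prod.snd = μ ∧
      ∫ p, dist p.1 p.2 ^ 2 ∂γ ≤ ε := by
  obtain ⟨C, hC⟩ : ∃ C : ℝ, ∀ x y : X, dist x y ≤ C := by
    obtain ⟨C, hC⟩ := Metric.isBounded_iff.1 (isCompact_univ (X := X)).isBounded
    exact ⟨C, fun x y => hC (Set.mem_univ x) (Set.mem_univ y)⟩
  -- The cost is at most `η ^ 2` on pairs in a common cell and `C ^ 2` elsewhere.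
  let η : ℝ := Real.sqrt (ε / 2)
  have hη : 0 < η := Real.sqrt_pos.2 (by positivity)
  have hη2 : η ^ 2 = ε / 2 := Real.sq_sqrt (by positivity)
  let δ : NNReal := ⟨min (1 / 2) (ε / 2 / (C ^ 2 + 1)), by positivity⟩
  have hδpos : 0 < δ := by
    rw [← NNReal.coe_pos]; change (0 : ℝ) < min (1 / 2) (ε / 2 / (C ^ 2 + 1)); positivity
  have hδhalf : (δ : ℝ) ≤ 1 / 2 := min_le_left _ _
  have hδ1 : δ < 1 := by
    rw [← NNReal.coe_lt_coe]; push_cast; linarith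
  have hδC : (δ : ℝ) * C ^ 2 ≤ ε / 2 := by
    have h1 : (δ : ℝ) ≤ ε / 2 / (C ^ 2 + 1) := min_le_right _ _
    have h2 : (δ : ℝ) * (C ^ 2 + 1) ≤ ε / 2 := (le_div_iff₀ (by positivity)).1 h1
    nlinarith [δ.2]
  obtain ⟨N, A, hA, hdisj, hcov, hfr, hdiam⟩ :=
    exists_partition_null_frontier (μ : Measure X) hη
  have hev : ∀ᶠ n in atTop, ∀ i, (1 - δ) * μ (A i) ≤ μs n (A i) := by
    rw [eventually_all]
    intro i
    have hlim := ProbabilityMeasure.tendsto_measure_of_null_frontier_of_tendsto h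
      (E := A i) (by rw [ProbabilityMeasure.null_iff_toMeasure_null]; exact hfr i)
    by_cases h0 : μ (A i) = 0
    · simp [h0]
    · refine hlim.eventually_const_le ?_
      have : 1 - δ < 1 := tsub_lt_self one_pos hδpos
      exact mul_lt_of_lt_one_left (pos_iff_ne_zero.2 h0) this
  filter_upwards [hev] with n hn
  obtain ⟨γ, h1, h2, h3⟩ := exists_coupling_of_partition (μ : Measure X) (μs n : Measure X) A hA
    hdisj hcov ((1 - δ : NNReal) : ENNReal) (δ : ENNReal)
    (by rw [← ENNReal.coe_add, tsub_add_cancel_of_le hδ1.le, ENNReal.coe_one])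
    (ENNReal.coe_ne_zero.2 (tsub_pos_of_lt hδ1).ne')
    (fun i => by
      rw [← ProbabilityMeasure.ennreal_coeFn_eq_coeFn_toMeasure,
        ← ProbabilityMeasure.ennreal_coeFn_eq_coeFn_toMeasure, ← ENNReal.coe_mul]
      exact ENNReal.coe_le_coe.2 (hn i))
  refine ⟨γ, h1, h2, ?_⟩
  have hγ : IsProbabilityMeasure γ := by
    refine ⟨?_⟩
    have := congrArg (fun ρ : Measure X => ρ Set.univ) h1
    simpa [Measure.map_apply measurable_fst MeasurableSet.univ] using this
  let F : Set (X × X) := (⋃ i, A i ×ˢ A i)ᶜ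
  have hF : MeasurableSet F := (MeasurableSet.iUnion fun i => (hA i).prod (hA i)).compl
  have hFδ : γ.real F ≤ δ := ENNReal.toReal_le_coe_of_le_coe h3
  calc ∫ p, dist p.1 p.2 ^ 2 ∂γ
      ≤ ∫ p, (η ^ 2 + F.indicator (fun _ => C ^ 2) p) ∂γ := by
        refine integral_mono_of_nonneg (Eventually.of_forall fun p => by positivity)
          ((integrable_const _).add ((integrable_const _).indicator hF))
          (Eventually.of_forall fun p => ?_)
        by_cases hp : p ∈ F
        · have := pow_le_pow_left₀ dist_nonneg (hC p.1 p.2) 2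
          simp only [Set.indicator_of_mem hp]
          nlinarith [sq_nonneg η]
        · have hp' : p ∈ ⋃ i, A i ×ˢ A i := by simpa [F] using hp
          obtain ⟨i, hi⟩ := Set.mem_iUnion.1 hp'
          simp only [Set.indicator_of_notMem hp, add_zero]
          exact pow_le_pow_left₀ dist_nonneg (hdiam i _ hi.1 _ hi.2) 2
    _ = η ^ 2 + γ.real F * C ^ 2 := by
        rw [integral_add (integrable_const _) ((integrable_const _).indicator hF),
          integral_indicator hF]
        simp
    _ ≤ ε := by
        have := mul_le_mul_of_nonneg_right hFδ (sq_nonneg C)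
        linarith

/-- Weak convergence of measures on a compact set implies convergence in `W2` of the measures
they induce on the ambient space. -/
lemma tendsto_W2_map_val {d : ℕ} {Ω : Set (Rd d)} [CompactSpace Ω]
    {qs : ℕ → ProbabilityMeasure Ω} {q : ProbabilityMeasure Ω} (h : Tendsto qs atTop (𝓝 q)) :
    Tendsto (fun n => W2 ((qs n : Measure Ω).map Subtype.val) ((q : Measure Ω).map Subtype.val))
      atTop (𝓝 0) := by
  have hv : Measurable (Subtype.val : Ω → Rd d) := measurable_subtype_coe
  have hsq : Tendsto (fun n => W2sq ((qs n : Measure Ω).map Subtype.val)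
      ((q : Measure Ω).map Subtype.val)) atTop (𝓝 0) := by
    have hnonneg : ∀ n, 0 ≤ W2sq ((qs n : Measure Ω).map Subtype.val)
        ((q : Measure Ω).map Subtype.val) := by
      intro n
      refine Real.sInf_nonneg ?_
      rintro _ ⟨π, -, rfl⟩
      exact integral_nonneg fun p => by positivity
    rw [Metric.tendsto_nhds]
    intro ε hε
    filter_upwards [exists_coupling_cost_le_s12 h (half_pos hε)] with n hn
    obtain ⟨γ, h1, h2, h3⟩ := hn
    have hvv : Measurable (Prod.map (Subtype.val : Ω → Rd d) (Subtype.val : Ω → Rd d)) :=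
      hv.prodMap hv
    have hle : W2sq ((qs n : Measure Ω).map Subtype.val) ((q : Measure Ω).map Subtype.val)
        ≤ ε / 2 := by
      refine le_trans (csInf_le ?_ ⟨γ.map (Prod.map Subtype.val Subtype.val), ⟨?_, ?_⟩, rfl⟩) ?_
      · refine ⟨0, ?_⟩
        rintro _ ⟨π, -, rfl⟩
        exact integral_nonneg fun p => by positivity
      · rw [Measure.map_map measurable_fst hvv, ← h1, Measure.map_map hv measurable_fst]
        rfl
      · rw [Measure.map_map measurable_snd hvv, ← h2, Measure.map_map hv measurable_snd]
        rfl
      · change ∫ p, ‖p.1 - p.2‖ ^ 2 ∂(γ.map (Prod.map Subtype.val Subtype.val)) ≤ ε / 2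
        rw [integral_map hvv.aemeasurable (by fun_prop)]
        simpa [Subtype.dist_eq, dist_eq_norm] using h3
    rw [Real.dist_eq, sub_zero, abs_of_nonneg (hnonneg n)]
    linarith
  have := (Real.continuous_sqrt.tendsto 0).comp hsq
  rwa [Real.sqrt_zero] at this

/-! ### Continuity of the variance -/

lemma integrable_of_continuous_compact {X E : Type*} [TopologicalSpace X] [CompactSpace X]
    [MeasurableSpace X] [OpensMeasurableSpace X] [NormedAddCommGroup E]
    [SecondCountableTopologyEither X E] (μ : Measure X) [IsFiniteMeasure μ] {f : X → E}
    (hf : Continuous f) : Integrable f μ := by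
  obtain ⟨C, hC⟩ := (isCompact_range hf).isBounded.exists_norm_le
  exact Integrable.of_bound hf.aestronglyMeasurable C
    (Eventually.of_forall fun x => hC _ ⟨x, rfl⟩)

/-- The variance of a measure on a compact set is its second moment minus the squared norm of its
barycenter, the latter written in coordinates so that only scalar integrals occur. -/
lemma Var_map_val {d : ℕ} {Ω : Set (Rd d)} [CompactSpace Ω] (q : ProbabilityMeasure Ω) :
    Var ((q : Measure Ω).map Subtype.val) =
      ∫ x : Ω, ‖(x : Rd d)‖ ^ 2 ∂(q : Measure Ω) -
        ∑ i, (∫ x : Ω, (x : Rd d) i ∂(q : Measure Ω)) ^ 2 := by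
  have hv : Measurable (Subtype.val : Ω → Rd d) := measurable_subtype_coe
  have hint : Integrable (fun x : Ω => (x : Rd d)) (q : Measure Ω) :=
    integrable_of_continuous_compact _ continuous_subtype_val
  have hint2 : Integrable (fun x : Ω => ‖(x : Rd d)‖ ^ 2) (q : Measure Ω) :=
    integrable_of_continuous_compact _ (by fun_prop)
  have hm : ∫ y, y ∂((q : Measure Ω).map Subtype.val) = ∫ x : Ω, (x : Rd d) ∂(q : Measure Ω) :=
    integral_map hv.aemeasurable (by fun_prop)
  rw [Var, hm, integral_map hv.aemeasurable (by fun_prop)]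
  set m : Rd d := ∫ x : Ω, (x : Rd d) ∂(q : Measure Ω) with hmdef
  have hcoord : ∀ i, ∫ x : Ω, (x : Rd d) i ∂(q : Measure Ω) = m i := fun i =>
    (EuclideanSpace.proj (𝕜 := ℝ) i).integral_comp_comm hint
  have hnorm : ∑ i, (∫ x : Ω, (x : Rd d) i ∂(q : Measure Ω)) ^ 2 = ‖m‖ ^ 2 := by
    rw [EuclideanSpace.norm_sq_eq]
    exact Finset.sum_congr rfl fun i _ => by rw [hcoord i, Real.norm_eq_abs, sq_abs]
  have hin : ∫ x : Ω, ⟪m, (x : Rd d)⟫ ∂(q : Measure Ω) = ‖m‖ ^ 2 := by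
    rw [integral_inner hint, ← hmdef, real_inner_self_eq_norm_sq]
  have hintin : Integrable (fun x : Ω => ⟪m, (x : Rd d)⟫) (q : Measure Ω) := hint.const_inner m
  have hexp : ∀ x : Ω, ‖(x : Rd d) - m‖ ^ 2 = ‖(x : Rd d)‖ ^ 2 - 2 * ⟪m, (x : Rd d)⟫ + ‖m‖ ^ 2 :=
    fun x => by rw [norm_sub_sq_real, real_inner_comm]
  have hsub : Integrable (fun x : Ω => ‖(x : Rd d)‖ ^ 2 - 2 * ⟪m, (x : Rd d)⟫) (q : Measure Ω) :=
    hint2.sub (hintin.const_mul 2)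
  rw [hnorm]
  calc ∫ x : Ω, ‖(x : Rd d) - m‖ ^ 2 ∂(q : Measure Ω)
      = ∫ x : Ω, (‖(x : Rd d)‖ ^ 2 - 2 * ⟪m, (x : Rd d)⟫ + ‖m‖ ^ 2) ∂(q : Measure Ω) :=
        integral_congr_ae (Eventually.of_forall hexp)
    _ = ∫ x : Ω, ‖(x : Rd d)‖ ^ 2 ∂(q : Measure Ω) - 2 * ‖m‖ ^ 2 + ‖m‖ ^ 2 := by
        rw [integral_add hsub (integrable_const _), integral_sub hint2 (hintin.const_mul 2),
          integral_const_mul, hin]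
        simp
    _ = _ := by ring

lemma continuous_Var_map_val {d : ℕ} {Ω : Set (Rd d)} [CompactSpace Ω] :
    Continuous fun q : ProbabilityMeasure Ω => Var ((q : Measure Ω).map Subtype.val) := by
  simp_rw [Var_map_val]
  refine Continuous.sub ?_ (continuous_finsetSum _ fun i _ => Continuous.pow ?_ 2)
  · exact ProbabilityMeasure.continuous_integral_continuousMap
      (⟨fun x : Ω => ‖(x : Rd d)‖ ^ 2, by fun_prop⟩ : C(Ω, ℝ))
  · exact ProbabilityMeasure.continuous_integral_continuousMap
      (⟨fun x : Ω => (x : Rd d) i, by fun_prop⟩ : C(Ω, ℝ))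

/-! ### The compact set of admissible couplings -/

/-- The first marginal of a probability measure on `Ω × Ω`. -/
def marg₁ {d : ℕ} {Ω : Set (Rd d)} (p : ProbabilityMeasure (Ω × Ω)) : ProbabilityMeasure Ω :=
  p.map measurable_fst.aemeasurable

/-- The second marginal of a probability measure on `Ω × Ω`. -/
def marg₂ {d : ℕ} {Ω : Set (Rd d)} (p : ProbabilityMeasure (Ω × Ω)) : ProbabilityMeasure Ω :=
  p.map measurable_snd.aemeasurable

/-- The probability measures on `Ω × Ω` that witness Kantorovich dominance by the centered
measure `ν` of a first marginal belonging to `D`. -/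
def dominanceCouplings {d : ℕ} (Ω : Set (Rd d)) (ν : Measure (Rd d))
    (D : Set (Measure (Rd d))) : Set (ProbabilityMeasure (Ω × Ω)) :=
  {p | (marg₂ p : Measure Ω).map Subtype.val = ν ∧
    ∫ z : Ω × Ω, ⟪(z.1 : Rd d), (z.2 : Rd d) - z.1⟫ ∂(p : Measure (Ω × Ω)) = 0 ∧
    (marg₁ p : Measure Ω).map Subtype.val ∈ D}

lemma continuous_marg₁ {d : ℕ} {Ω : Set (Rd d)} : Continuous (marg₁ (Ω := Ω)) :=
  ProbabilityMeasure.continuous_map continuous_fst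

lemma continuous_marg₂ {d : ℕ} {Ω : Set (Rd d)} : Continuous (marg₂ (Ω := Ω)) :=
  ProbabilityMeasure.continuous_map continuous_snd

lemma finiteSecondMoment_map_val {d : ℕ} {Ω : Set (Rd d)} [CompactSpace Ω]
    (q : ProbabilityMeasure Ω) : FiniteSecondMoment ((q : Measure Ω).map Subtype.val) := by
  rw [FiniteSecondMoment, integrable_map_measure (by fun_prop) measurable_subtype_coe.aemeasurable]
  exact integrable_of_continuous_compact _ (by fun_prop)

/-- Probability measures on the compact space `Ω × Ω` form a compact metrizable space, and each
defining condition is (sequentially) closed; for the condition on `D` this is `W2`-closedness. -/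
lemma isCompact_dominanceCouplings {d : ℕ} (Ω : Set (Rd d)) [CompactSpace Ω]
    (ν : Measure (Rd d)) [IsProbabilityMeasure ν] (D : Set (Measure (Rd d)))
    (hclosed : ∀ μs : ℕ → Measure (Rd d), (∀ n, μs n ∈ D) →
      ∀ μ : Measure (Rd d), IsProbabilityMeasure μ → FiniteSecondMoment μ →
        Tendsto (fun n => W2 (μs n) μ) atTop (𝓝 0) → μ ∈ D) :
    IsCompact (dominanceCouplings Ω ν D) := by
  have hv : Continuous (Subtype.val : Ω → Rd d) := continuous_subtype_val
  refine IsClosed.isCompact (IsClosed.and ?_ (IsClosed.and ?_ ?_))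
  · have : IsClosed {p : ProbabilityMeasure (Ω × Ω) |
        (marg₂ p).map hv.measurable.aemeasurable = (⟨ν, inferInstance⟩ : ProbabilityMeasure _)} :=
      isClosed_eq ((ProbabilityMeasure.continuous_map hv).comp continuous_marg₂) continuous_const
    convert this using 3 with p
    exact ⟨fun h => Subtype.ext h, fun h => congrArg Subtype.val h⟩
  · exact isClosed_eq (ProbabilityMeasure.continuous_integral_continuousMap
      (⟨fun z : Ω × Ω => ⟪(z.1 : Rd d), (z.2 : Rd d) - z.1⟫, by fun_prop⟩ : C(Ω × Ω, ℝ)))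
      continuous_const
  · refine IsSeqClosed.isClosed fun ps p hps hp => ?_
    exact hclosed _ hps _ (Measure.isProbabilityMeasure_map hv.measurable.aemeasurable)
      (finiteSecondMoment_map_val _)
      (tendsto_W2_map_val ((continuous_marg₁.tendsto p).comp hp))

lemma memMK_of_mem_dominanceCouplings {d : ℕ} {Ω : Set (Rd d)} [CompactSpace Ω]
    {ν : Measure (Rd d)} (hν0 : (∫ y, y ∂ν) = 0) {D : Set (Measure (Rd d))}
    {p : ProbabilityMeasure (Ω × Ω)} (hp : p ∈ dominanceCouplings Ω ν D) :
    MemMK Ω ν ((marg₁ p : Measure Ω).map Subtype.val) := by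
  have hv : Measurable (Subtype.val : Ω → Rd d) := measurable_subtype_coe
  have hvv : Measurable (Prod.map (Subtype.val : Ω → Rd d) (Subtype.val : Ω → Rd d)) :=
    hv.prodMap hv
  have hΩ : MeasurableSet Ω := (isCompact_iff_compactSpace.2 inferInstance).measurableSet
  refine ⟨Measure.isProbabilityMeasure_map hv.aemeasurable, finiteSecondMoment_map_val _, ?_,
    (p : Measure (Ω × Ω)).map (Prod.map Subtype.val Subtype.val), ⟨?_, ?_⟩, ?_⟩
  · rw [Measure.map_apply hv hΩ.compl]
    simp
  · rw [Measure.map_map measurable_fst hvv, marg₁, ProbabilityMeasure.toMeasure_map,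
      Measure.map_map hv measurable_fst]
    rfl
  · rw [Measure.map_map measurable_snd hvv, ← hp.1, marg₂, ProbabilityMeasure.toMeasure_map,
      Measure.map_map hv measurable_snd]
    rfl
  · rw [hν0, integral_map hvv.aemeasurable (by fun_prop)]
    simpa using hp.2.1

/-- A coupling of measures concentrated on `Ω` restricts to `Ω × Ω`. -/
lemma exists_mem_dominanceCouplings {d : ℕ} {Ω : Set (Rd d)} [CompactSpace Ω]
    {ν : Measure (Rd d)} (hνΩ : ν Ωᶜ = 0) (hν0 : (∫ y, y ∂ν) = 0) {D : Set (Measure (Rd d))}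
    {μ : Measure (Rd d)} (hμD : μ ∈ D) (hμ : MemMK Ω ν μ) :
    ∃ p ∈ dominanceCouplings Ω ν D, (marg₁ p : Measure Ω).map Subtype.val = μ := by
  obtain ⟨hprob, -, hμΩ, π, ⟨h1, h2⟩, h3⟩ := hμ
  have hΩ : MeasurableSet Ω := (isCompact_iff_compactSpace.2 inferInstance).measurableSet
  have hv : Measurable (Subtype.val : Ω → Rd d) := measurable_subtype_coe
  have hvv : MeasurableEmbedding (Prod.map (Subtype.val : Ω → Rd d) (Subtype.val : Ω → Rd d)) :=
    (MeasurableEmbedding.subtype_coe hΩ).prodMap (MeasurableEmbedding.subtype_coe hΩ)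
  have hπ : IsProbabilityMeasure π := by
    refine ⟨?_⟩
    have := congrArg (fun ρ : Measure (Rd d) => ρ Set.univ) h1
    simpa [Measure.map_apply measurable_fst MeasurableSet.univ] using this
  have hae : ∀ᵐ z ∂π,
      z ∈ Set.range (Prod.map (Subtype.val : Ω → Rd d) (Subtype.val : Ω → Rd d)) := by
    have a1 : ∀ᵐ z ∂π, z.1 ∈ Ω := by
      rw [← h1] at hμΩ
      exact ae_of_ae_map measurable_fst.aemeasurable (mem_ae_iff.2 hμΩ)
    have a2 : ∀ᵐ z ∂π, z.2 ∈ Ω := by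
      rw [← h2] at hνΩ
      exact ae_of_ae_map measurable_snd.aemeasurable (mem_ae_iff.2 hνΩ)
    filter_upwards [a1, a2] with z hz1 hz2
    exact ⟨(⟨z.1, hz1⟩, ⟨z.2, hz2⟩), rfl⟩
  let P : Measure (Ω × Ω) := π.comap (Prod.map Subtype.val Subtype.val)
  have hP : P.map (Prod.map Subtype.val Subtype.val) = π := by
    rw [hvv.map_comap, Measure.restrict_eq_self_of_ae_mem hae]
  have hPprob : IsProbabilityMeasure P := by
    refine ⟨?_⟩
    have := congrArg (fun ρ : Measure (Rd d × Rd d) => ρ Set.univ) hP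
    simpa [Measure.map_apply hvv.measurable MeasurableSet.univ] using this
  have e1 : (P.map Prod.fst).map Subtype.val = μ := by
    rw [Measure.map_map hv measurable_fst, ← h1, ← hP,
      Measure.map_map measurable_fst hvv.measurable]
    rfl
  have e2 : (P.map Prod.snd).map Subtype.val = ν := by
    rw [Measure.map_map hv measurable_snd, ← h2, ← hP,
      Measure.map_map measurable_snd hvv.measurable]
    rfl
  refine ⟨⟨P, hPprob⟩, ⟨e2, ?_, ?_⟩, e1⟩
  · rw [hν0, ← hP, hvv.integral_map] at h3
    simpa using h3
  · change (P.map Prod.fst).map Subtype.val ∈ D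
    rwa [e1]

/-- For compact convex `Ω ∋ 0`, `ν ∈ P_{2,0}(Ω)`, and `D ⊆ P₂(ℝ^d)` closed in `W₂` with
`D ∩ M_{ν,Ω}^K ≠ ∅`, the problem `max { Var(μ) : μ ∈ D ∩ M_{ν,Ω}^K }` admits a solution. -/
theorem stmt_12 {d : ℕ} (Ω : Set (Rd d)) (hΩc : IsCompact Ω) (hΩconv : Convex ℝ Ω)
    (hΩ0 : (0 : Rd d) ∈ Ω)
    (ν : Measure (Rd d)) [IsProbabilityMeasure ν] (hν2 : FiniteSecondMoment ν)
    (hνΩ : ν Ωᶜ = 0) (hν0 : (∫ y, y ∂ν) = 0)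
    (D : Set (Measure (Rd d)))
    (hD : ∀ ρ ∈ D, IsProbabilityMeasure ρ ∧ FiniteSecondMoment ρ)
    (hclosed : ∀ μs : ℕ → Measure (Rd d), (∀ n, μs n ∈ D) →
      ∀ μ : Measure (Rd d), IsProbabilityMeasure μ → FiniteSecondMoment μ →
        Tendsto (fun n => W2 (μs n) μ) atTop (𝓝 0) → μ ∈ D)
    (hne : ∃ μ ∈ D, MemMK Ω ν μ) :
    ∃ μ ∈ D, MemMK Ω ν μ ∧ ∀ ρ ∈ D, MemMK Ω ν ρ → Var ρ ≤ Var μ := by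
  have : CompactSpace Ω := isCompact_iff_compactSpace.1 hΩc
  have hcont : Continuous fun p : ProbabilityMeasure (Ω × Ω) =>
      Var ((marg₁ p : Measure Ω).map Subtype.val) :=
    continuous_Var_map_val.comp continuous_marg₁
  obtain ⟨μ₀, hμ₀D, hμ₀⟩ := hne
  obtain ⟨p₀, hp₀, -⟩ := exists_mem_dominanceCouplings hνΩ hν0 hμ₀D hμ₀
  obtain ⟨p, hp, hmax⟩ := (isCompact_dominanceCouplings Ω ν D hclosed).exists_isMaxOn
    ⟨p₀, hp₀⟩ hcont.continuousOn
  refine ⟨_, hp.2.2, memMK_of_mem_dominanceCouplings hν0 hp, fun ρ hρD hρ => ?_⟩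
  obtain ⟨p', hp', rfl⟩ := exists_mem_dominanceCouplings hνΩ hν0 hρD hρ
  exact hmax hp'
end
end
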